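/- Dong–Kim mixed-norm extrapolation theorem: Let K′, K″, p, p′, p″ ∈ (1,∞), let w′ be an A_{p′}-weight on ℝ′ with [w′]_{A_{p′}(ℝ′)} ≤ K′ and w″ an A_{p″}-weight on ℝ″ with [w″]_{A_{p″}(ℝ″)} ≤ K″. Then there exists a constant K_p, depending only on K′, K″, p, p′, p″ and the two real-analytic structures, such that: if f, g are nonnegative measurable functions on ℝ^d = ℝ′ × ℝ″ satisfying ‖f‖_{L_p(w)} ≤ ‖g‖_{L_p(w)} for every A_p-weight w on ℝ^d (with respect to the product boxes and μ = μ′ × μ″) with [w]_{A_p} ≤ K_p, then ‖f‖_{L_{p′,p″}(w′,w″)} ≤ 2^{2+1/p′+1/p″} ‖g‖_{L_{p′,p″}(w′,w″)}. -/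

import Mathlib

/-!
The proof applies the Rubio de Francia extrapolation argument twice.

Extrapolation for one family of boxes (`extrapolation`) turns an inequality in `L_p(w)` for all
`A_p`-weights `w` with a large enough constant into an inequality in `L_q(w)` for all `A_q`-weights
`w` with a given constant, losing a factor `2`. The `A_p`-weights to which the hypothesis is applied
are `H ^ (1 - p) * V`, with `A_1`-weights `H` and `V` (`isAp_of_A1`). These majorize `g` and the
function dual to `f`, and are produced by iterating the maximal operator (`rubio`). This requires
the maximal operator to be bounded on `L_q(w)` with a bound controlled by the `A_q` constant
(`muckenhoupt`). That bound is obtained by dominating the maximal function pointwise by a composition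
of the maximal functions for the measures `w μ` and `w ^ (-1 / (q - 1)) μ` (`ApPair.maxFn_le`, an
argument of Lerner). Both measures are doubling, so that the unweighted theory, based on the Vitali
covering lemma, applies to both (`maxFn_strong`). None of this needs more of the boxes than
the properties collected in `BoxFamily` and `BoxDoubling`, which the anisotropic boxes of the two
factors and their products share.

For the mixed norm, let `F(x'')` and `G(x'')` be the norms of `f(·, x'')` and `g(·, x'')` in
`L_{p'}(w')`. If `W` is an `A_{p'}`-weight on the second factor, then `w'(x') W(x'')` is an
`A_{p'}`-weight on the product (`IsAp.prod`). Extrapolation from `p` to `p'` on the product and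
Tonelli's theorem give `‖F‖ ≤ 2 ‖G‖` in `L_{p'}(W)`. As `W` is arbitrary up to the size of its
constant, extrapolation from `p'` to `p''` on the second factor gives `‖F‖ ≤ 4 ‖G‖` in
`L_{p''}(w'')`, which is the assertion, because `4 ≤ 2 ^ (2 + 1 / p' + 1 / p'')`.
-/

open MeasureTheory ENNReal NNReal Filter

noncomputable section

/-- The open box `Q_l(x) = x + ∏_j (−l^{k_j}/2, l^{k_j}/2)`. -/
def qBox (d : ℕ) (k : Fin d → ℕ) (l : ℝ) (x : Fin d → ℝ) : Set (Fin d → ℝ) :=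
  {y | ∀ j, |y j - x j| < l ^ (k j) / 2}

/-- The average `(μ s)⁻¹ ∫_s g dμ` of a nonnegative function, computed in `ℝ≥0∞`
(so that `0/0 = 0`). -/
def avgE {α : Type*} [MeasurableSpace α] (μ : Measure α) (s : Set α) (g : α → ℝ) : ℝ≥0∞ :=
  (μ s)⁻¹ * ∫⁻ y in s, ENNReal.ofReal (g y) ∂μ

/-- `w` is an admissible weight: measurable, positive `μ`-a.e., with finite averages over all
boxes of the family `Q`. -/
def IsWeight {α : Type*} [MeasurableSpace α] (μ : Measure α) (Q : ℝ → α → Set α)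
    (w : α → ℝ) : Prop :=
  Measurable w ∧ (∀ᵐ x ∂μ, 0 < w x) ∧
    ∀ l : ℝ, 0 < l → ∀ x, (∫⁻ y in Q l x, ENNReal.ofReal (w y) ∂μ) < ⊤

/-- `w` is an `A_1`-weight with constant (at most) `K`:
`w_Q ≤ K w(x)` for every box `Q` and `μ`-a.e. `x ∈ Q`. -/
def IsA1 {α : Type*} [MeasurableSpace α] (μ : Measure α) (Q : ℝ → α → Set α)
    (K : ℝ≥0) (w : α → ℝ) : Prop :=
  IsWeight μ Q w ∧
    ∀ l : ℝ, 0 < l → ∀ x, ∀ᵐ y ∂μ, y ∈ Q l x →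
      avgE μ (Q l x) w ≤ (K : ℝ≥0∞) * ENNReal.ofReal (w y)

/-- `w` is an `A_p`-weight (`p > 1`) with constant (at most) `K`:
`w_Q ((w^{−1/(p−1)})_Q)^{p−1} ≤ K` for every box `Q`. -/
def IsAp {α : Type*} [MeasurableSpace α] (μ : Measure α) (Q : ℝ → α → Set α)
    (p : ℝ) (K : ℝ≥0) (w : α → ℝ) : Prop :=
  IsWeight μ Q w ∧
    ∀ l : ℝ, 0 < l → ∀ x,
      avgE μ (Q l x) w * (avgE μ (Q l x) fun y => w y ^ (-1 / (p - 1))) ^ (p - 1) ≤ (K : ℝ≥0∞)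


/-- The weighted mixed norm
`‖f‖_{L_{p′,p″}(w′,w″)} = (∫ (∫ |f(x′,x″)|^{p′} w′ dμ′)^{p″/p′} w″ dμ″)^{1/p″}`. -/
def mixedNorm {d' d'' : ℕ} (μ' : Measure (Fin d' → ℝ)) (μ'' : Measure (Fin d'' → ℝ))
    (p' p'' : ℝ) (w' : (Fin d' → ℝ) → ℝ) (w'' : (Fin d'' → ℝ) → ℝ)
    (f : (Fin d' → ℝ) × (Fin d'' → ℝ) → ℝ) : ℝ≥0∞ :=
  (∫⁻ x'', (∫⁻ x', ENNReal.ofReal |f (x', x'')| ^ p' * ENNReal.ofReal (w' x') ∂μ') ^ (p'' / p') *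
      ENNReal.ofReal (w'' x'') ∂μ'') ^ (1 / p'')
/-! ### Maximal functions of doubling measures -/

/-- A family of open boxes `Q l x` of size `l` around `x` which behaves like the balls of a
quasi-metric: a box meeting a box of at least half its size is contained in the eightfold
enlargement of the latter. -/
structure BoxFamily {α : Type*} [TopologicalSpace α] (Q : ℝ → α → Set α) : Prop where
  isOpen : ∀ l x, IsOpen (Q l x)
  mem : ∀ l x, 0 < l → x ∈ Q l x
  engulf : ∀ l l' x x', 0 < l → 0 < l' → l ≤ 2 * l' → (Q l x ∩ Q l' x').Nonempty →
    Q l x ⊆ Q (8 * l') x'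

/-- `ν` gives every box positive finite mass, and enlarging a box eightfold multiplies its mass by
at most `D`. -/
structure BoxDoubling {α : Type*} [MeasurableSpace α] (ν : Measure α) (Q : ℝ → α → Set α)
    (D : ℝ≥0) : Prop where
  pos : ∀ l x, 0 < l → ν (Q l x) ≠ 0
  fin : ∀ l x, 0 < l → ν (Q l x) ≠ ∞
  le : ∀ l x, 0 < l → ν (Q (8 * l) x) ≤ D * ν (Q l x)

/-- The uncentered maximal function of `f` over the boxes `Q l y`, with averages taken with respect
to `ν`. -/
def maxFn {α : Type*} [MeasurableSpace α] (ν : Measure α) (Q : ℝ → α → Set α)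
    (f : α → ℝ≥0∞) (x : α) : ℝ≥0∞ :=
  ⨆ (l : ℝ) (y : α) (_ : 0 < l ∧ x ∈ Q l y), (ν (Q l y))⁻¹ * ∫⁻ z in Q l y, f z ∂ν

set_option linter.unusedSectionVars false

section Maximal

variable {α : Type*} [TopologicalSpace α] [SecondCountableTopology α] [MeasurableSpace α]
  [BorelSpace α] {Q : ℝ → α → Set α} {ν : Measure α} {D : ℝ≥0}

lemma lt_maxFn_iff {f : α → ℝ≥0∞} {x : α} {c : ℝ≥0∞} : c < maxFn ν Q f x ↔
    ∃ l y, 0 < l ∧ x ∈ Q l y ∧ c < (ν (Q l y))⁻¹ * ∫⁻ z in Q l y, f z ∂ν := by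
  simp only [maxFn, lt_iSup_iff, exists_prop, and_assoc]

lemma avg_le_maxFn {f : α → ℝ≥0∞} {x : α} {l : ℝ} {y : α} (hl : 0 < l) (hx : x ∈ Q l y) :
    (ν (Q l y))⁻¹ * ∫⁻ z in Q l y, f z ∂ν ≤ maxFn ν Q f x :=
  le_iSup_of_le l (le_iSup_of_le y (le_iSup_of_le ⟨hl, hx⟩ le_rfl))

lemma measurable_maxFn (hQ : BoxFamily Q) (f : α → ℝ≥0∞) : Measurable (maxFn ν Q f) := by
  refine measurable_of_Ioi fun c => ?_
  have : maxFn ν Q f ⁻¹' Set.Ioi c =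
      ⋃ (l : ℝ) (y : α) (_ : 0 < l ∧ c < (ν (Q l y))⁻¹ * ∫⁻ z in Q l y, f z ∂ν), Q l y := by
    ext x
    simp only [Set.mem_preimage, Set.mem_Ioi, lt_maxFn_iff, Set.mem_iUnion, exists_prop]
    grind
  rw [this]
  exact (isOpen_iUnion fun l => isOpen_iUnion fun y => isOpen_iUnion fun _ =>
    hQ.isOpen l y).measurableSet

/-- The weak type `(1, 1)` bound, from the Vitali covering lemma. -/
lemma maxFn_weak (hQ : BoxFamily Q) (hν : BoxDoubling ν Q D) (f : α → ℝ≥0∞) (c : ℝ≥0∞) :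
    c * ν {x | c < maxFn ν Q f x} ≤ D * ∫⁻ x, f x ∂ν := by
  -- Boxes of size at most `n`, so that the covering lemma applies.
  let t : ℕ → Set (ℝ × α) := fun n =>
    {i | 0 < i.1 ∧ i.1 ≤ n ∧ c < (ν (Q i.1 i.2))⁻¹ * ∫⁻ z in Q i.1 i.2, f z ∂ν}
  have hU : {x | c < maxFn ν Q f x} = ⋃ n, ⋃ i ∈ t n, Q i.1 i.2 := by
    ext x
    simp only [Set.mem_ofPred_eq, lt_maxFn_iff, Set.mem_iUnion, exists_prop, Prod.exists, t]
    constructor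
    · rintro ⟨l, y, hl, hx, h⟩
      obtain ⟨n, hn⟩ := exists_nat_ge l
      exact ⟨n, l, y, ⟨hl, hn, h⟩, hx⟩
    · rintro ⟨n, l, y, ⟨hl, hn, h⟩, hx⟩
      exact ⟨l, y, hl, hx, h⟩
  have hmono : Monotone fun n => ⋃ i ∈ t n, Q i.1 i.2 := by
    intro m n hmn
    refine Set.biUnion_subset_biUnion_left fun i hi => ⟨hi.1, hi.2.1.trans ?_, hi.2.2⟩
    exact_mod_cast hmn
  rw [hU, hmono.measure_iUnion, ENNReal.mul_iSup]
  refine iSup_le fun n => ?_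
  obtain ⟨u, hut, hdisj, hcov⟩ := Vitali.exists_disjoint_subfamily_covering_enlargement
    (fun i : ℝ × α => Q i.1 i.2) (t n) (fun i => i.1) 2 (by norm_num) (fun i hi => hi.1.le) n
    (fun i hi => hi.2.1) (fun i hi => ⟨i.2, hQ.mem _ _ hi.1⟩)
  have huc : u.Countable := hdisj.countable_of_isOpen (fun i _ => hQ.isOpen _ _)
    (fun i hi => ⟨i.2, hQ.mem _ _ (hut hi).1⟩)
  have hsub : (⋃ i ∈ t n, Q i.1 i.2) ⊆ ⋃ i ∈ u, Q (8 * i.1) i.2 := by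
    refine Set.iUnion₂_subset fun a ha => ?_
    obtain ⟨b, hb, hne, hle⟩ := hcov a ha
    exact (hQ.engulf _ _ _ _ ha.1 (hut hb).1 hle hne).trans
      (Set.subset_biUnion_of_mem (u := fun i : ℝ × α => Q (8 * i.1) i.2) hb)
  calc c * ν (⋃ i ∈ t n, Q i.1 i.2)
      ≤ c * ∑' i : u, ν (Q (8 * i.1.1) i.1.2) := by
        gcongr
        exact (measure_mono hsub).trans (measure_biUnion_le ν huc _)
    _ = ∑' i : u, c * ν (Q (8 * i.1.1) i.1.2) := ENNReal.tsum_mul_left.symm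
    _ ≤ ∑' i : u, D * ∫⁻ z in Q i.1.1 i.1.2, f z ∂ν := by
        refine ENNReal.tsum_le_tsum fun i => ?_
        have hi := hut i.2
        have h0 := hν.pos i.1.1 i.1.2 hi.1
        have h1 := hν.fin i.1.1 i.1.2 hi.1
        calc c * ν (Q (8 * i.1.1) i.1.2)
            ≤ ((ν (Q i.1.1 i.1.2))⁻¹ * ∫⁻ z in Q i.1.1 i.1.2, f z ∂ν) *
              (D * ν (Q i.1.1 i.1.2)) := mul_le_mul' hi.2.2.le (hν.le _ _ hi.1)
          _ = D * (∫⁻ z in Q i.1.1 i.1.2, f z ∂ν) *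
              ((ν (Q i.1.1 i.1.2))⁻¹ * ν (Q i.1.1 i.1.2)) := by ring
          _ = _ := by rw [ENNReal.inv_mul_cancel h0 h1, mul_one]
    _ = D * ∫⁻ z in ⋃ i ∈ u, Q i.1 i.2, f z ∂ν := by
        rw [ENNReal.tsum_mul_left, lintegral_biUnion huc
          (fun i _ => (hQ.isOpen _ _).measurableSet) hdisj]
    _ ≤ D * ∫⁻ x, f x ∂ν := by
        exact mul_le_mul_right (setLIntegral_le_lintegral _ _) _

/-- Only the part of `f` above level `c` matters for the size of `{M f > 2c}`. -/
lemma maxFn_weak' (hQ : BoxFamily Q) (hν : BoxDoubling ν Q D) (f : α → ℝ≥0∞) (c : ℝ≥0∞) :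
    c * ν {x | c < maxFn ν Q f x / 2} ≤ D * ∫⁻ x, (if c < f x then f x else 0) ∂ν := by
  refine le_trans ?_ (maxFn_weak hQ hν _ c)
  refine mul_le_mul_right (measure_mono fun x hx => ?_) _
  have hx2 : c + c < maxFn ν Q f x := by
    rw [← two_mul, mul_comm]
    exact (ENNReal.lt_div_iff_mul_lt (by simp) (by simp)).1 hx
  obtain ⟨l, y, hl, hxy, h⟩ := lt_maxFn_iff.1 hx2
  refine lt_maxFn_iff.2 ⟨l, y, hl, hxy, ?_⟩
  refine lt_of_add_lt_add_right (a := c) (h.trans_le ?_)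
  have h0 := hν.pos l y hl
  have h1 := hν.fin l y hl
  calc (ν (Q l y))⁻¹ * ∫⁻ z in Q l y, f z ∂ν
      ≤ (ν (Q l y))⁻¹ * ∫⁻ z in Q l y, ((if c < f z then f z else 0) + c) ∂ν := by
        gcongr with z
        split_ifs with hz
        · exact le_self_add
        · simpa using hz
    _ = _ := by
        rw [lintegral_add_right _ measurable_const, mul_add, setLIntegral_const, mul_comm c,
          ← mul_assoc _ _ c, ENNReal.inv_mul_cancel h0 h1, one_mul]

/-- The layer-cake formula for a single number `a ∈ [0, ∞]`. -/
lemma lintegral_layer (a : ℝ≥0∞) {s : ℝ} (hs : 0 < s) :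
    ∫⁻ t in Set.Ioi (0 : ℝ), (if ENNReal.ofReal t < a then ENNReal.ofReal (t ^ (s - 1)) else 0) =
      ENNReal.ofReal (1 / s) * a ^ s := by
  have key : ∀ b : ℝ, 0 ≤ b → ∫⁻ t in Set.Ioi (0 : ℝ),
      (if ENNReal.ofReal t < ENNReal.ofReal b then ENNReal.ofReal (t ^ (s - 1)) else 0) =
      ENNReal.ofReal (1 / s) * (ENNReal.ofReal b) ^ s := by
    intro b hb
    have e1 : ∫⁻ t in Set.Ioi (0 : ℝ),
        (if ENNReal.ofReal t < ENNReal.ofReal b then ENNReal.ofReal (t ^ (s - 1)) else 0) =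
        ∫⁻ t in Set.Ioo 0 b, ENNReal.ofReal (t ^ (s - 1)) := by
      rw [← Set.Ioi_inter_Iio, Set.inter_comm, ← setLIntegral_indicator measurableSet_Iio]
      refine setLIntegral_congr_fun measurableSet_Ioi fun t ht => ?_
      have : ENNReal.ofReal t < ENNReal.ofReal b ↔ t ∈ Set.Iio b := by
        rw [ENNReal.ofReal_lt_ofReal_iff_of_nonneg (le_of_lt ht), Set.mem_Iio]
      simp only [Set.indicator, this]
    have h_intble := intervalIntegral.intervalIntegrable_rpow' (a := 0) (b := b)
      (r := s - 1) (by linarith)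
    rw [intervalIntegrable_iff_integrableOn_Ioo_of_le hb] at h_intble
    rw [e1, ← ofReal_integral_eq_lintegral_ofReal h_intble, ← integral_Ioc_eq_integral_Ioo,
      ← intervalIntegral.integral_of_le hb, integral_rpow (Or.inl (by linarith)),
      ENNReal.ofReal_rpow_of_nonneg hb hs.le, ← ENNReal.ofReal_mul (by positivity)]
    · congr 1
      rw [sub_add_cancel, Real.zero_rpow hs.ne']
      ring
    · filter_upwards [ae_restrict_mem measurableSet_Ioo] with t ht
      exact Real.rpow_nonneg ht.1.le _
  by_cases ha : a = ∞
  · subst ha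
    rw [ENNReal.top_rpow_of_pos hs, ENNReal.mul_top (by simpa using hs)]
    have hlim : Tendsto (fun n : ℕ => ENNReal.ofReal (1 / s) * (ENNReal.ofReal (n : ℝ)) ^ s)
        atTop (nhds (ENNReal.ofReal (1 / s) * ∞ ^ s)) := by
      refine ENNReal.Tendsto.const_mul ?_ (Or.inr (by simp))
      refine (ENNReal.continuous_rpow_const.tendsto _).comp ?_
      simpa using ENNReal.tendsto_nat_nhds_top
    rw [ENNReal.top_rpow_of_pos hs, ENNReal.mul_top (by simpa using hs)] at hlim
    refine top_le_iff.1 (le_of_tendsto' hlim fun n => ?_)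
    rw [← key n (by positivity)]
    refine lintegral_mono fun t => ?_
    dsimp only
    split_ifs <;> simp_all
  · have := key a.toReal ENNReal.toReal_nonneg
    rwa [ENNReal.ofReal_toReal ha] at this

/-- The maximal function is bounded on `L_r(ν)`, `r > 1`, with a bound depending on the measure
only through its doubling constant. -/
lemma maxFn_strong (D : ℝ≥0) {r : ℝ} (hr : 1 < r) : ∃ C : ℝ≥0, ∀ {ν : Measure α} [SigmaFinite ν],
    BoxFamily Q → BoxDoubling ν Q D → ∀ {f : α → ℝ≥0∞}, Measurable f →
      ∫⁻ x, maxFn ν Q f x ^ r ∂ν ≤ C * ∫⁻ x, f x ^ r ∂ν := by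
  refine ⟨2 ^ r * r.toNNReal * D * (1 / (r - 1)).toNNReal, fun {ν} _ hQ hν f hf => ?_⟩
  have hM := measurable_maxFn (ν := ν) hQ f
  have hr0 : 0 < r := by linarith
  have hr1 : 0 < r - 1 := by linarith
  have h1 : ∀ x, maxFn ν Q f x ^ r = 2 ^ r * ENNReal.ofReal r *
      ∫⁻ t in Set.Ioi (0 : ℝ), (if ENNReal.ofReal t < maxFn ν Q f x / 2 then
        ENNReal.ofReal (t ^ (r - 1)) else 0) := by
    intro x
    rw [lintegral_layer _ hr0, mul_assoc, ← mul_assoc (ENNReal.ofReal r),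
      ← ENNReal.ofReal_mul hr0.le, mul_one_div_cancel hr0.ne', ENNReal.ofReal_one, one_mul,
      ← ENNReal.mul_rpow_of_nonneg _ _ hr0.le, ENNReal.mul_div_cancel (by simp) (by simp)]
  have hmeas1 : Measurable (Function.uncurry fun (x : α) (t : ℝ) =>
      if ENNReal.ofReal t < maxFn ν Q f x / 2 then ENNReal.ofReal (t ^ (r - 1)) else 0) := by
    refine Measurable.ite (measurableSet_lt (by fun_prop) ?_) (by fun_prop) measurable_const
    exact (hM.comp measurable_fst).div_const 2
  have hmeas2 : Measurable (Function.uncurry fun (x : α) (t : ℝ) => f x *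
      if ENNReal.ofReal t < f x then ENNReal.ofReal (t ^ (r - 1 - 1)) else 0) := by
    refine (hf.comp measurable_fst).mul ?_
    refine Measurable.ite (measurableSet_lt (by fun_prop) ?_) (by fun_prop) measurable_const
    exact hf.comp measurable_fst
  have h2 : ∫⁻ x, (∫⁻ t in Set.Ioi (0 : ℝ), (if ENNReal.ofReal t < maxFn ν Q f x / 2 then
        ENNReal.ofReal (t ^ (r - 1)) else 0)) ∂ν ≤
      D * (ENNReal.ofReal (1 / (r - 1)) * ∫⁻ x, f x ^ r ∂ν) := by
    calc _ = ∫⁻ t in Set.Ioi (0 : ℝ), (∫⁻ x, (if ENNReal.ofReal t < maxFn ν Q f x / 2 then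
              ENNReal.ofReal (t ^ (r - 1)) else 0) ∂ν) :=
            lintegral_lintegral_swap hmeas1.aemeasurable
      _ ≤ ∫⁻ t in Set.Ioi (0 : ℝ), D * (∫⁻ x, (f x * if ENNReal.ofReal t < f x then
              ENNReal.ofReal (t ^ (r - 1 - 1)) else 0) ∂ν) := by
            refine setLIntegral_mono' measurableSet_Ioi fun t ht => ?_
            have ht0 : (0 : ℝ) < t := ht
            have e1 : (∫⁻ x, (if ENNReal.ofReal t < maxFn ν Q f x / 2 then
                ENNReal.ofReal (t ^ (r - 1)) else 0) ∂ν) =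
                ENNReal.ofReal (t ^ (r - 1 - 1)) * (ENNReal.ofReal t *
                  ν {x | ENNReal.ofReal t < maxFn ν Q f x / 2}) := by
              rw [← mul_assoc, ← ENNReal.ofReal_mul (by positivity),
                ← Real.rpow_add_one ht0.ne', sub_add_cancel,
                ← lintegral_indicator_const (measurableSet_lt measurable_const
                  (hM.div_const 2))]
              simp [Set.indicator]
            have e2 : (∫⁻ x, (f x * if ENNReal.ofReal t < f x then
                ENNReal.ofReal (t ^ (r - 1 - 1)) else 0) ∂ν) =
                ENNReal.ofReal (t ^ (r - 1 - 1)) *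
                  ∫⁻ x, (if ENNReal.ofReal t < f x then f x else 0) ∂ν := by
              rw [← lintegral_const_mul' _ _ ENNReal.ofReal_ne_top]
              congr 1 with x
              split_ifs <;> simp [mul_comm]
            rw [e1, e2, mul_left_comm (D : ℝ≥0∞)]
            exact mul_le_mul_right (maxFn_weak' hQ hν f _) _
      _ = D * ∫⁻ t in Set.Ioi (0 : ℝ), (∫⁻ x, (f x * if ENNReal.ofReal t < f x then
              ENNReal.ofReal (t ^ (r - 1 - 1)) else 0) ∂ν) :=
            lintegral_const_mul' _ _ ENNReal.coe_ne_top
      _ = D * ∫⁻ x, (∫⁻ t in Set.Ioi (0 : ℝ), (f x * if ENNReal.ofReal t < f x then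
              ENNReal.ofReal (t ^ (r - 1 - 1)) else 0)) ∂ν := by
            rw [lintegral_lintegral_swap hmeas2.aemeasurable]
      _ = D * ∫⁻ x, ENNReal.ofReal (1 / (r - 1)) * f x ^ r ∂ν := by
            congr 2 with x
            rw [lintegral_const_mul _ (Measurable.ite (measurableSet_lt (by fun_prop)
              measurable_const) (by fun_prop) measurable_const), lintegral_layer _ hr1,
              mul_left_comm]
            congr 1
            have := ENNReal.rpow_add_of_nonneg (x := f x) 1 (r - 1) zero_le_one hr1.le
            rw [add_sub_cancel, ENNReal.rpow_one] at this
            exact this.symm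
      _ = _ := by rw [lintegral_const_mul' _ _ ENNReal.ofReal_ne_top]
  simp_rw [h1]
  rw [lintegral_const_mul' _ _ (ENNReal.mul_ne_top (by simp) ENNReal.ofReal_ne_top)]
  refine (mul_le_mul_right h2 _).trans (le_of_eq ?_)
  push_cast
  rw [ENNReal.coe_rpow_of_nonneg _ hr0.le]
  simp only [ENNReal.ofReal, ENNReal.coe_ofNat]
  ring

end Maximal

/-! ### Muckenhoupt weights and the weighted maximal inequality -/

/-- The `A_q` condition in a form symmetric in the weight `ω` and its dual weight
`σ = ω ^ (-1 / (q - 1))`, where `q'` is the conjugate exponent of `q`. Both weights take values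
in `(0, ∞)`, as forced by `mul_eq`. -/
structure ApPair {α : Type*} [MeasurableSpace α] (μ : Measure α) (Q : ℝ → α → Set α)
    (q q' : ℝ) (K : ℝ≥0) (ω σ : α → ℝ≥0∞) : Prop where
  conj : q.HolderConjugate q'
  meas_left : Measurable ω
  meas_right : Measurable σ
  mul_eq : ∀ x, ω x ^ (1 / q) * σ x ^ (1 / q') = 1
  bound : ∀ l x, 0 < l →
    (∫⁻ y in Q l x, ω y ∂μ) ^ (1 / q) * (∫⁻ y in Q l x, σ y ∂μ) ^ (1 / q') ≤ K * μ (Q l x)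

section Muckenhoupt

variable {α : Type*} [TopologicalSpace α] [SecondCountableTopology α] [MeasurableSpace α]
  [BorelSpace α] {Q : ℝ → α → Set α} {μ : Measure α} {D K : ℝ≥0} {q q' : ℝ} {ω σ : α → ℝ≥0∞}

lemma ApPair.symm (h : ApPair μ Q q q' K ω σ) : ApPair μ Q q' q K σ ω where
  conj := h.conj.symm
  meas_left := h.meas_right
  meas_right := h.meas_left
  mul_eq x := by rw [mul_comm, h.mul_eq]
  bound l x hl := by rw [mul_comm]; exact h.bound l x hl

lemma ApPair.ne_zero (h : ApPair μ Q q q' K ω σ) (x : α) : ω x ≠ 0 := by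
  intro h0
  have := h.mul_eq x
  have hq := h.conj.pos
  rw [h0, ENNReal.zero_rpow_of_pos (by positivity), zero_mul] at this
  exact zero_ne_one this

lemma ApPair.ne_top (h : ApPair μ Q q q' K ω σ) (x : α) : ω x ≠ ∞ := by
  intro h0
  have := h.mul_eq x
  have hq := h.conj.pos
  have hq' := h.conj.symm.pos
  rw [h0, ENNReal.top_rpow_of_pos (by positivity), ENNReal.top_mul] at this
  · exact ENNReal.top_ne_one this
  · have := h.symm.ne_zero x
    simp [this, hq'.le]

lemma ApPair.rpow_eq (h : ApPair μ Q q q' K ω σ) (x : α) : ω x ^ (1 - q') = σ x := by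
  have hq := h.conj.pos
  have hq' := h.conj.symm.pos
  have h0 := h.ne_zero x
  have ht := h.ne_top x
  have h1 : σ x ^ (1 / q') = ω x ^ (-(1 / q)) := by
    rw [ENNReal.rpow_neg]
    exact (ENNReal.eq_inv_of_mul_eq_one_left (by rw [mul_comm]; exact h.mul_eq x))
  have h2 : (σ x ^ (1 / q')) ^ q' = (ω x ^ (-(1 / q))) ^ q' := by rw [h1]
  rw [← ENNReal.rpow_mul, ← ENNReal.rpow_mul, one_div_mul_cancel hq'.ne', ENNReal.rpow_one] at h2
  rw [h2]
  congr 1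
  have := h.conj.inv_add_inv_eq_one
  field_simp at this ⊢
  linarith

/-- The lower bound complementary to the `A_q` condition, from Hölder's inequality. -/
lemma ApPair.measure_le (h : ApPair μ Q q q' K ω σ) (s : Set α) :
    μ s ≤ (∫⁻ y in s, ω y ∂μ) ^ (1 / q) * (∫⁻ y in s, σ y ∂μ) ^ (1 / q') := by
  have hq := h.conj.pos
  have hq' := h.conj.symm.pos
  have := ENNReal.lintegral_mul_le_Lp_mul_Lq (μ.restrict s) h.conj
    (h.meas_left.pow_const (1 / q)).aemeasurable (h.meas_right.pow_const (1 / q')).aemeasurable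
  simpa [Pi.mul_apply, h.mul_eq, ← ENNReal.rpow_mul, ← one_div, hq.ne', hq'.ne'] using this

lemma ApPair.setLIntegral_ne_zero (hμ : BoxDoubling μ Q D)
    (h : ApPair μ Q q q' K ω σ) {l : ℝ} (hl : 0 < l) (x : α) : ∫⁻ y in Q l x, ω y ∂μ ≠ 0 := by
  have hq := h.conj.pos
  intro h0
  have := h.measure_le (Q l x)
  rw [h0, ENNReal.zero_rpow_of_pos (by positivity), zero_mul] at this
  exact hμ.pos l x hl (le_zero_iff.1 this)

lemma ApPair.setLIntegral_ne_top (hμ : BoxDoubling μ Q D)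
    (h : ApPair μ Q q q' K ω σ) {l : ℝ} (hl : 0 < l) (x : α) : ∫⁻ y in Q l x, ω y ∂μ ≠ ∞ := by
  have hq := h.conj.pos
  have hq' := h.conj.symm.pos
  intro h0
  have := h.bound l x hl
  have h1 := h.symm.setLIntegral_ne_zero hμ hl x
  rw [h0, ENNReal.top_rpow_of_pos (by positivity), ENNReal.top_mul] at this
  · exact ENNReal.mul_ne_top ENNReal.coe_ne_top (hμ.fin l x hl) (top_le_iff.1 this)
  · simp [h1, hq'.le]

/-- The measure `ω μ` is doubling, by comparing the `A_q` bound on the large box with Hölder's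
inequality on the small one. -/
lemma ApPair.doubling (hQ : BoxFamily Q) (hμ : BoxDoubling μ Q D) (h : ApPair μ Q q q' K ω σ) :
    BoxDoubling (μ.withDensity ω) Q ((K * D) ^ q) := by
  have hq := h.conj.pos
  have hq' := h.conj.symm.pos
  have hd : ∀ l x, (μ.withDensity ω) (Q l x) = ∫⁻ y in Q l x, ω y ∂μ := fun l x =>
    withDensity_apply _ (hQ.isOpen l x).measurableSet
  refine ⟨fun l x hl => ?_, fun l x hl => ?_, fun l x hl => ?_⟩
  · rw [hd]; exact h.setLIntegral_ne_zero hμ hl x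
  · rw [hd]; exact h.setLIntegral_ne_top hμ hl x
  rw [hd, hd]
  set A := ∫⁻ y in Q (8 * l) x, ω y ∂μ
  set a := ∫⁻ y in Q l x, ω y ∂μ
  set B := ∫⁻ y in Q (8 * l) x, σ y ∂μ with hB
  set b := ∫⁻ y in Q l x, σ y ∂μ
  have hbB : b ≤ B := by
    refine lintegral_mono_set ?_
    exact hQ.engulf l l x x hl hl (by linarith) ⟨x, hQ.mem l x hl, hQ.mem l x hl⟩
  have hB0 : B ≠ 0 := h.symm.setLIntegral_ne_zero hμ (by linarith) x
  have hBt : B ≠ ∞ := h.symm.setLIntegral_ne_top hμ (by linarith) x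
  have key : A ^ (1 / q) * B ^ (1 / q') ≤ (K * D * a ^ (1 / q)) * B ^ (1 / q') := by
    calc A ^ (1 / q) * B ^ (1 / q') ≤ K * μ (Q (8 * l) x) := h.bound _ _ (by linarith)
      _ ≤ K * (D * μ (Q l x)) := by gcongr; exact hμ.le l x hl
      _ ≤ K * (D * (a ^ (1 / q) * b ^ (1 / q'))) := by gcongr; exact h.measure_le _
      _ ≤ K * (D * (a ^ (1 / q) * B ^ (1 / q'))) := by gcongr
      _ = _ := by ring
  have key2 : A ^ (1 / q) ≤ K * D * a ^ (1 / q) := by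
    refine (ENNReal.mul_le_mul_iff_left ?_ ?_).1 key
    · simp [hB0, hBt]
    · simp [hB0, hBt]
  have key3 := ENNReal.rpow_le_rpow key2 hq.le
  rw [ENNReal.mul_rpow_of_nonneg _ _ hq.le, ← ENNReal.rpow_mul, ← ENNReal.rpow_mul,
    one_div_mul_cancel hq.ne', ENNReal.rpow_one, ENNReal.rpow_one] at key3
  rw [ENNReal.coe_rpow_of_nonneg _ hq.le]
  exact_mod_cast key3

/-- Lerner's pointwise bound of the maximal function by a composition of the maximal functions
with respect to the measures `ω μ` and `σ μ`. -/
lemma ApPair.maxFn_le (hQ : BoxFamily Q) (hμ : BoxDoubling μ Q D) (h : ApPair μ Q q q' K ω σ)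
    {f : α → ℝ≥0∞} (hf : Measurable f) (x : α) :
    maxFn μ Q f x ≤ K ^ q' * (maxFn (μ.withDensity ω) Q (fun y =>
      maxFn (μ.withDensity σ) Q (fun z => f z / σ z) y ^ (q / q') / ω y) x) ^ (q' / q) := by
  have hq := h.conj.pos
  have hq' := h.conj.symm.pos
  set F := maxFn (μ.withDensity σ) Q (fun z => f z / σ z) with hF
  have hFm : Measurable F := measurable_maxFn hQ _
  set G := maxFn (μ.withDensity ω) Q (fun y => F y ^ (q / q') / ω y) with hG
  refine iSup_le fun l => iSup_le fun y => iSup_le fun ⟨hl, hx⟩ => ?_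
  have hs := (hQ.isOpen l y).measurableSet
  set m := μ (Q l y) with hm
  set a := ∫⁻ y in Q l y, ω y ∂μ with ha
  set b := ∫⁻ y in Q l y, σ y ∂μ with hb
  have hm0 : m ≠ 0 := hμ.pos l y hl
  have hmt : m ≠ ∞ := hμ.fin l y hl
  have ha0 : a ≠ 0 := h.setLIntegral_ne_zero hμ hl y
  have hat : a ≠ ∞ := h.setLIntegral_ne_top hμ hl y
  have hb0 : b ≠ 0 := h.symm.setLIntegral_ne_zero hμ hl y
  have hbt : b ≠ ∞ := h.symm.setLIntegral_ne_top hμ hl y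
  set I := ∫⁻ z in Q l y, f z ∂μ with hI
  -- The `σ`-average of `f / σ` bounds `F` from below on the box.
  have h1 : ∀ z ∈ Q l y, b⁻¹ * I ≤ F z := by
    intro z hz
    refine le_trans (le_of_eq ?_) (avg_le_maxFn hl hz)
    rw [withDensity_apply _ hs, restrict_withDensity hs,
      lintegral_withDensity_eq_lintegral_mul _ h.meas_right
        (show Measurable fun z => f z / σ z from hf.div h.meas_right)]
    refine congrArg (b⁻¹ * ·) (lintegral_congr fun z => ?_)
    rw [Pi.mul_apply, ENNReal.mul_div_cancel (h.symm.ne_zero z) (h.symm.ne_top z)]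
  -- Averaging this bound with respect to `ω μ` bounds `G` from below.
  have h2 : a⁻¹ * ((b⁻¹ * I) ^ (q / q') * m) ≤ G x := by
    refine le_trans ?_ (avg_le_maxFn hl hx)
    rw [withDensity_apply _ hs, restrict_withDensity hs,
      lintegral_withDensity_eq_lintegral_mul _ h.meas_left
        (show Measurable fun z => F z ^ (q / q') / ω z from
          (hFm.pow_const _).div h.meas_left)]
    refine mul_le_mul_right ?_ _
    rw [← setLIntegral_const]
    refine setLIntegral_mono' hs fun z hz => ?_
    rw [Pi.mul_apply, ENNReal.mul_div_cancel (h.ne_zero z) (h.ne_top z)]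
    exact ENNReal.rpow_le_rpow (h1 z hz) (by positivity)
  have h3 : (a⁻¹ * ((b⁻¹ * I) ^ (q / q') * m)) ^ (q' / q) =
      a⁻¹ ^ (q' / q) * (b⁻¹ * I * m ^ (q' / q)) := by
    rw [ENNReal.mul_rpow_of_nonneg _ _ (by positivity),
      ENNReal.mul_rpow_of_nonneg _ _ (by positivity), ← ENNReal.rpow_mul]
    congr 3
    rw [div_mul_div_cancel₀ hq'.ne', div_self hq.ne', ENNReal.rpow_one]
  have h4 : a ^ (q' / q) * b ≤ K ^ q' * (m ^ (q' / q) * m) := by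
    have := ENNReal.rpow_le_rpow (h.bound l y hl) hq'.le
    rw [ENNReal.mul_rpow_of_nonneg _ _ hq'.le, ENNReal.mul_rpow_of_nonneg _ _ hq'.le,
      ← ENNReal.rpow_mul, ← ENNReal.rpow_mul, one_div_mul_cancel hq'.ne', ENNReal.rpow_one,
      one_div_mul_eq_div] at this
    refine this.trans (le_of_eq ?_)
    congr 1
    have e : q' = q' / q + 1 := by
      have := h.conj.inv_add_inv_eq_one
      field_simp at this ⊢
      linarith
    conv_lhs => rw [e]
    rw [ENNReal.rpow_add _ _ hm0 hmt, ENNReal.rpow_one]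
  have e1 : a⁻¹ ^ (q' / q) * a ^ (q' / q) = 1 := by
    rw [← ENNReal.mul_rpow_of_nonneg _ _ (by positivity), ENNReal.inv_mul_cancel ha0 hat,
      ENNReal.one_rpow]
  calc m⁻¹ * I = (a⁻¹ ^ (q' / q) * a ^ (q' / q)) * (b⁻¹ * b) * (m⁻¹ * I) := by
        rw [e1, ENNReal.inv_mul_cancel hb0 hbt]; simp
    _ = (a ^ (q' / q) * b) * (a⁻¹ ^ (q' / q) * b⁻¹ * (m⁻¹ * I)) := by ring
    _ ≤ (K ^ q' * (m ^ (q' / q) * m)) * (a⁻¹ ^ (q' / q) * b⁻¹ * (m⁻¹ * I)) :=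
        mul_le_mul_left h4 _
    _ = K ^ q' * (a⁻¹ ^ (q' / q) * (b⁻¹ * I * m ^ (q' / q))) * (m⁻¹ * m) := by ring
    _ = K ^ q' * (a⁻¹ * ((b⁻¹ * I) ^ (q / q') * m)) ^ (q' / q) := by
        rw [ENNReal.inv_mul_cancel hm0 hmt, mul_one, h3]
    _ ≤ _ := by
        refine mul_le_mul_right (ENNReal.rpow_le_rpow h2 (by positivity)) _

/-- Muckenhoupt's theorem: the maximal function is bounded on `L_q(ω)`. -/
lemma muckenhoupt [SigmaFinite μ] (hQ : BoxFamily Q) (hμ : BoxDoubling μ Q D)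
    (hqq : q.HolderConjugate q') (K : ℝ≥0) :
    ∃ C : ℝ≥0, 1 ≤ C ∧ ∀ ω σ, ApPair μ Q q q' K ω σ → ∀ f : α → ℝ≥0∞, Measurable f →
      ∫⁻ x, maxFn μ Q f x ^ q * ω x ∂μ ≤ C * ∫⁻ x, f x ^ q * ω x ∂μ := by
  have hq := hqq.pos
  have hq' := hqq.symm.pos
  obtain ⟨C1, hC1⟩ := maxFn_strong (α := α) (Q := Q) ((K * D) ^ q) hqq.symm.lt
  obtain ⟨C2, hC2⟩ := maxFn_strong (α := α) (Q := Q) ((K * D) ^ q') hqq.lt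
  refine ⟨max 1 ((K ^ q') ^ q * (C1 * C2)), le_max_left _ _, fun ω σ h f hf => ?_⟩
  refine le_trans ?_ (mul_le_mul_left (ENNReal.coe_le_coe.2 (le_max_right _ _)) _)
  have hsω : SigmaFinite (μ.withDensity ω) :=
    SigmaFinite.withDensity_of_ne_top (ae_of_all _ h.ne_top)
  have hsσ : SigmaFinite (μ.withDensity σ) :=
    SigmaFinite.withDensity_of_ne_top (ae_of_all _ h.symm.ne_top)
  set F := maxFn (μ.withDensity σ) Q (fun z => f z / σ z) with hF
  have hFm : Measurable F := measurable_maxFn hQ _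
  set G := maxFn (μ.withDensity ω) Q (fun y => F y ^ (q / q') / ω y) with hG
  have hGm : Measurable G := measurable_maxFn hQ _
  have hgm : Measurable (fun y => F y ^ (q / q') / ω y) := (hFm.pow_const _).div h.meas_left
  have hfm : Measurable (fun z => f z / σ z) := hf.div h.meas_right
  have s1 := hC1 hQ (h.doubling hQ hμ) hgm
  have s2 := hC2 hQ (h.symm.doubling hQ hμ) hfm
  rw [lintegral_withDensity_eq_lintegral_mul _ h.meas_left (hGm.pow_const _),
    lintegral_withDensity_eq_lintegral_mul _ h.meas_left (hgm.pow_const _)] at s1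
  rw [lintegral_withDensity_eq_lintegral_mul _ h.meas_right (hFm.pow_const _),
    lintegral_withDensity_eq_lintegral_mul _ h.meas_right (hfm.pow_const _)] at s2
  have aux : ∀ {p p' : ℝ} {u v : α → ℝ≥0∞}, ApPair μ Q p p' K u v → ∀ z,
      (u z)⁻¹ ^ p' * u z = v z := by
    intro p p' u v huv z
    rw [ENNReal.inv_rpow, ← ENNReal.rpow_neg]
    conv_lhs => rw [← ENNReal.rpow_one (u z), ← ENNReal.rpow_mul, one_mul]
    rw [← ENNReal.rpow_add _ _ (huv.ne_zero z) (huv.ne_top z), neg_add_eq_sub, huv.rpow_eq]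
  calc ∫⁻ x, maxFn μ Q f x ^ q * ω x ∂μ
      ≤ ∫⁻ x, (K ^ q') ^ q * (ω * fun y => G y ^ q') x ∂μ := by
        refine lintegral_mono fun x => ?_
        have := ENNReal.rpow_le_rpow (h.maxFn_le hQ hμ hf x) hq.le
        rw [ENNReal.mul_rpow_of_nonneg _ _ hq.le, ← ENNReal.rpow_mul _ (q' / q),
          div_mul_cancel₀ _ hq.ne'] at this
        refine (mul_le_mul_left this _).trans (le_of_eq ?_)
        rw [Pi.mul_apply]
        ring
    _ = (K ^ q') ^ q * ∫⁻ x, (ω * fun y => G y ^ q') x ∂μ := by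
        refine lintegral_const_mul' _ _ ?_
        rw [← ENNReal.coe_rpow_of_nonneg _ hq'.le, ← ENNReal.coe_rpow_of_nonneg _ hq.le]
        exact ENNReal.coe_ne_top
    _ ≤ (K ^ q') ^ q * (C1 * ∫⁻ x, (ω * fun y => (F y ^ (q / q') / ω y) ^ q') x ∂μ) := by
        gcongr
    _ = (K ^ q') ^ q * (C1 * ∫⁻ x, (σ * fun y => F y ^ q) x ∂μ) := by
        congr 3 with x
        rw [Pi.mul_apply, Pi.mul_apply, div_eq_mul_inv (F x ^ (q / q')),
          ENNReal.mul_rpow_of_nonneg _ _ hq'.le, ← ENNReal.rpow_mul, div_mul_cancel₀ _ hq'.ne',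
          ← aux h x]
        ring
    _ ≤ (K ^ q') ^ q * (C1 * (C2 * ∫⁻ x, (σ * fun y => (f y / σ y) ^ q) x ∂μ)) := by
        gcongr
    _ = (K ^ q') ^ q * (C1 * (C2 * ∫⁻ x, f x ^ q * ω x ∂μ)) := by
        congr 4 with x
        rw [Pi.mul_apply, div_eq_mul_inv (f x), ENNReal.mul_rpow_of_nonneg _ _ hq.le,
          ← aux h.symm x]
        ring
    _ = _ := by
        push_cast
        rw [ENNReal.coe_rpow_of_nonneg _ hq.le, ENNReal.coe_rpow_of_nonneg _ hq'.le]
        ring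

end Muckenhoupt

/-! ### The Rubio de Francia algorithm -/

section RubioDeFrancia

variable {α : Type*} [TopologicalSpace α] [SecondCountableTopology α] [MeasurableSpace α]
  [BorelSpace α] {Q : ℝ → α → Set α} {μ : Measure α} {D K : ℝ≥0} {q q' : ℝ} {ω σ : α → ℝ≥0∞}

lemma lintegral_withDensity_comm (hω : Measurable ω) {f : α → ℝ≥0∞} (hf : Measurable f) :
    ∫⁻ x, f x ∂(μ.withDensity ω) = ∫⁻ x, f x * ω x ∂μ := by
  rw [lintegral_withDensity_eq_lintegral_mul _ hω hf]
  simp only [Pi.mul_apply, mul_comm]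

/-- Minkowski's inequality for countable sums. -/
lemma lintegral_Lp_tsum_le {ν : Measure α} {f : ℕ → α → ℝ≥0∞} (hf : ∀ k, Measurable (f k))
    (hq : 1 ≤ q) :
    (∫⁻ x, (∑' k, f k x) ^ q ∂ν) ^ (1 / q) ≤ ∑' k, (∫⁻ x, f k x ^ q ∂ν) ^ (1 / q) := by
  have hq0 : 0 < q := by linarith
  have hfin : ∀ n, (∫⁻ x, (∑ k ∈ Finset.range n, f k x) ^ q ∂ν) ^ (1 / q) ≤
      ∑ k ∈ Finset.range n, (∫⁻ x, f k x ^ q ∂ν) ^ (1 / q) := by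
    intro n
    induction n with
    | zero => simp [hq0]
    | succ n ih =>
      simp only [Finset.sum_range_succ]
      refine le_trans ?_ (add_le_add_left ih _)
      have hm : Measurable fun x => ∑ k ∈ Finset.range n, f k x :=
        Finset.measurable_fun_sum _ fun k _ => hf k
      exact ENNReal.lintegral_Lp_add_le hm.aemeasurable (hf n).aemeasurable hq
  have hlim : Tendsto (fun n => ∫⁻ x, (∑ k ∈ Finset.range n, f k x) ^ q ∂ν) atTop
      (nhds (∫⁻ x, (∑' k, f k x) ^ q ∂ν)) := by
    refine lintegral_tendsto_of_tendsto_of_monotone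
      (fun n => ((Finset.measurable_fun_sum _ fun k _ => hf k).pow_const _).aemeasurable)
      (ae_of_all _ fun x m n hmn => ?_) (ae_of_all _ fun x => ?_)
    · refine ENNReal.rpow_le_rpow ?_ hq0.le
      exact Finset.sum_le_sum_of_subset (Finset.range_mono hmn)
    · exact (ENNReal.continuous_rpow_const.tendsto _).comp (ENNReal.tendsto_nat_tsum _)
  refine le_of_tendsto' ((ENNReal.continuous_rpow_const.tendsto _).comp hlim) fun n => ?_
  exact (hfin n).trans (ENNReal.sum_le_tsum _)

lemma maxFn_const_mul {ν : Measure α} (c : ℝ≥0) (f : α → ℝ≥0∞) (x : α) :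
    maxFn ν Q (fun y => c * f y) x = c * maxFn ν Q f x := by
  simp only [maxFn, ENNReal.mul_iSup, lintegral_const_mul' _ _ ENNReal.coe_ne_top]
  simp only [mul_left_comm]

lemma maxFn_tsum_le {ν : Measure α} {f : ℕ → α → ℝ≥0∞} (hf : ∀ k, Measurable (f k)) (x : α) :
    maxFn ν Q (fun y => ∑' k, f k y) x ≤ ∑' k, maxFn ν Q (f k) x := by
  refine iSup_le fun l => iSup_le fun y => iSup_le fun ⟨hl, hx⟩ => ?_
  rw [lintegral_tsum fun k => (hf k).aemeasurable, ← ENNReal.tsum_mul_left]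
  exact ENNReal.tsum_le_tsum fun k => avg_le_maxFn hl hx

/-- `L_q(ω)` contains strictly positive functions of arbitrarily small norm. -/
lemma exists_pos_small [SigmaFinite μ] (hω : Measurable ω) (hωt : ∀ x, ω x ≠ ∞) (hq : 0 < q)
    {ε : ℝ≥0∞} (hε : ε ≠ 0) :
    ∃ u : α → ℝ≥0∞, Measurable u ∧ (∀ x, 0 < u x) ∧ (∫⁻ x, u x ^ q * ω x ∂μ) ^ (1 / q) < ε := by
  have : SigmaFinite (μ.withDensity ω) := SigmaFinite.withDensity_of_ne_top (ae_of_all _ hωt)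
  obtain ⟨g, hg0, hgm, hgi⟩ := exists_pos_lintegral_lt_of_sigmaFinite (μ.withDensity ω)
    (ε := ε ^ q) (by simp [hε, hq.le])
  have hgm' : Measurable fun x => (g x : ℝ≥0∞) := hgm.coe_nnreal_ennreal
  refine ⟨fun x => (g x : ℝ≥0∞) ^ (1 / q), hgm'.pow_const _, fun x => ?_, ?_⟩
  · exact ENNReal.rpow_pos (by exact_mod_cast hg0 x) ENNReal.coe_ne_top
  · rw [lintegral_withDensity_comm hω hgm'] at hgi
    simp only [← ENNReal.rpow_mul, one_div_mul_cancel hq.ne', ENNReal.rpow_one]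
    have := ENNReal.rpow_lt_rpow hgi (one_div_pos.2 hq)
    rwa [← ENNReal.rpow_mul, mul_one_div_cancel hq.ne', ENNReal.rpow_one] at this

/-- The Rubio de Francia algorithm: every `h` of norm less than `B` in `L_q(ω)` has a positive
`A_1` majorant of norm at most `4 B / 3`, namely the sum of the iterates of a small multiple of the
maximal operator. The `A_1` constant does not depend on the weights. -/
lemma rubio [SigmaFinite μ] (hQ : BoxFamily Q) (hμ : BoxDoubling μ Q D)
    (hqq : q.HolderConjugate q') (K : ℝ≥0) :
    ∃ C : ℝ≥0, 0 < C ∧ ∀ ω σ, ApPair μ Q q q' K ω σ → ∀ h : α → ℝ≥0∞, Measurable h →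
      ∀ B : ℝ≥0∞, (∫⁻ x, h x ^ q * ω x ∂μ) ^ (1 / q) < B →
      ∃ H : α → ℝ≥0∞, Measurable H ∧ (∀ x, h x ≤ H x) ∧ (∀ x, 0 < H x) ∧
        (∫⁻ x, H x ^ q * ω x ∂μ) ^ (1 / q) ≤ ENNReal.ofReal (4 / 3) * B ∧
        ∀ x, maxFn μ Q H x ≤ C * H x := by
  have hq := hqq.pos
  obtain ⟨C, hC1, hC⟩ := muckenhoupt hQ hμ hqq K
  set A : ℝ≥0 := C ^ (1 / q) with hA
  have hA0 : 0 < A := NNReal.rpow_pos (by positivity)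
  refine ⟨4 * A, by positivity, fun ω σ hω h hh B hB => ?_⟩
  set N : (α → ℝ≥0∞) → ℝ≥0∞ := fun f => (∫⁻ x, f x ^ q * ω x ∂μ) ^ (1 / q) with hN
  have hNν : ∀ f : α → ℝ≥0∞, Measurable f →
      N f = (∫⁻ x, f x ^ q ∂(μ.withDensity ω)) ^ (1 / q) := fun f hf => by
    rw [lintegral_withDensity_comm hω.meas_left (hf.pow_const _)]
  obtain ⟨u, hum, hu0, hu⟩ := exists_pos_small hω.meas_left hω.ne_top hq
    (tsub_pos_of_lt hB).ne' (μ := μ)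
  set h0 : α → ℝ≥0∞ := h + u with hh0
  have hh0m : Measurable h0 := hh.add hum
  have hNh0 : N h0 ≤ B := by
    calc N h0 ≤ N h + N u := by
          rw [hNν _ hh0m, hNν _ hh, hNν _ hum]
          exact ENNReal.lintegral_Lp_add_le hh.aemeasurable hum.aemeasurable hqq.lt.le
      _ ≤ N h + (B - N h) := add_le_add_right hu.le _
      _ = B := add_tsub_cancel_of_le hB.le
  -- `T` shrinks the norm of `L_q(ω)` at least by the factor `1 / 4`.
  let T : (α → ℝ≥0∞) → (α → ℝ≥0∞) := fun f x => ((4 * A)⁻¹ : ℝ≥0) * maxFn μ Q f x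
  have hTm : ∀ f, Measurable (T f) := fun f => (measurable_maxFn hQ f).const_mul _
  have hTN : ∀ f, Measurable f → N (T f) ≤ ((4 : ℝ≥0)⁻¹ : ℝ≥0) * N f := by
    intro f hf
    have h1 := ENNReal.rpow_le_rpow (hC ω σ hω f hf) (one_div_pos.2 hq).le
    rw [ENNReal.mul_rpow_of_nonneg _ _ (one_div_pos.2 hq).le,
      ← ENNReal.coe_rpow_of_nonneg _ (one_div_pos.2 hq).le, ← hA] at h1
    have h2 : N (T f) = ((4 * A)⁻¹ : ℝ≥0) * N (maxFn μ Q f) := by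
      simp only [hN, T, ENNReal.mul_rpow_of_nonneg _ _ hq.le, mul_assoc]
      rw [lintegral_const_mul' _ _ (by
          rw [← ENNReal.coe_rpow_of_nonneg _ hq.le]; exact ENNReal.coe_ne_top),
        ENNReal.mul_rpow_of_nonneg _ _ (one_div_pos.2 hq).le, ← ENNReal.rpow_mul,
        mul_one_div_cancel hq.ne', ENNReal.rpow_one]
    rw [h2]
    refine (mul_le_mul_right h1 _).trans (le_of_eq ?_)
    rw [← mul_assoc, ← ENNReal.coe_mul]
    congr 2
    field_simp
  let it : ℕ → α → ℝ≥0∞ := fun k => T^[k] h0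
  have hits : ∀ k, it (k + 1) = T (it k) := fun k => Function.iterate_succ_apply' T k h0
  have hitm : ∀ k, Measurable (it k) := by
    intro k
    cases k with
    | zero => exact hh0m
    | succ k => rw [hits]; exact hTm _
  have hitN : ∀ k, N (it k) ≤ ((4 : ℝ≥0∞)⁻¹) ^ k * B := by
    intro k
    induction k with
    | zero => simpa [it] using hNh0
    | succ k ih =>
      rw [hits, pow_succ', mul_assoc]
      refine (hTN _ (hitm k)).trans ?_
      rw [ENNReal.coe_inv (by norm_num), ENNReal.coe_ofNat]
      exact mul_le_mul_right ih _
  have hle0 : ∀ x, h0 x ≤ ∑' k, it k x := fun x => ENNReal.le_tsum (f := fun k => it k x) 0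
  refine ⟨fun x => ∑' k, it k x, Measurable.tsum hitm, fun x => ?_, fun x => ?_, ?_,
    fun x => ?_⟩
  · exact le_trans le_self_add (hle0 x)
  · exact lt_of_lt_of_le ((hu0 x).trans_le le_add_self) (hle0 x)
  · calc N (fun x => ∑' k, it k x) ≤ ∑' k, N (it k) := by
          rw [hNν _ (Measurable.tsum hitm)]
          refine (lintegral_Lp_tsum_le hitm hqq.lt.le).trans (le_of_eq ?_)
          exact tsum_congr fun k => (hNν _ (hitm k)).symm
      _ ≤ ∑' k, ((4 : ℝ≥0∞)⁻¹) ^ k * B := ENNReal.tsum_le_tsum hitN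
      _ = ENNReal.ofReal (4 / 3) * B := by
          rw [ENNReal.tsum_mul_right, ENNReal.tsum_geometric]
          congr 1
          have e : (4 : ℝ≥0∞)⁻¹ = ENNReal.ofReal (1 / 4) := by
            rw [one_div, ENNReal.ofReal_inv_of_pos (by norm_num)]
            norm_num
          rw [e, ← ENNReal.ofReal_one, ← ENNReal.ofReal_sub _ (by norm_num),
            ← ENNReal.ofReal_inv_of_pos (by norm_num)]
          norm_num
  · have e : ∀ k, maxFn μ Q (it k) x = ((4 * A : ℝ≥0) : ℝ≥0∞) * it (k + 1) x := by
      intro k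
      rw [hits]
      simp only [T]
      rw [← mul_assoc, ← ENNReal.coe_mul, mul_inv_cancel₀ (by positivity), ENNReal.coe_one,
        one_mul]
    refine (maxFn_tsum_le hitm x).trans ?_
    simp_rw [e]
    rw [ENNReal.tsum_mul_left]
    refine mul_le_mul_right ?_ _
    exact ENNReal.tsum_comp_le_tsum_of_injective (add_left_injective 1) (fun k => it k x)

end RubioDeFrancia

/-! ### Extrapolation for a single family of boxes -/

section Extrapolation

variable {α : Type*} [TopologicalSpace α] [SecondCountableTopology α] [MeasurableSpace α]
  [BorelSpace α] {Q : ℝ → α → Set α} {μ : Measure α} {D K : ℝ≥0} {p p' q q' : ℝ}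
  {ω σ : α → ℝ≥0∞}

lemma rpow_anti {x y : ℝ≥0∞} {z : ℝ} (hz : z ≤ 0) (h : x ≤ y) : y ^ z ≤ x ^ z := by
  rw [← neg_neg z, ENNReal.rpow_neg, ENNReal.rpow_neg x]
  exact ENNReal.inv_le_inv.2 (ENNReal.rpow_le_rpow h (by linarith))

/-- The easy half of the Jones factorization theorem: if `H` and `V` are `A_1`-weights, then
`H ^ (1 - p) * V` is an `A_p`-weight. -/
lemma isAp_of_A1 (hQ : BoxFamily Q) (hμ : BoxDoubling μ Q D) (hp : 1 < p) {C₁ C₂ : ℝ≥0}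
    (hC₁ : 0 < C₁) (hC₂ : 0 < C₂) {H V : α → ℝ≥0∞} (hHm : Measurable H) (hVm : Measurable V)
    (hH0 : ∀ x, 0 < H x) (hV0 : ∀ x, 0 < V x) (hHt : ∀ᵐ x ∂μ, H x ≠ ∞) (hVt : ∀ᵐ x ∂μ, V x ≠ ∞)
    (hH : ∀ x, maxFn μ Q H x ≤ C₁ * H x) (hV : ∀ x, maxFn μ Q V x ≤ C₂ * V x) :
    IsAp μ Q p (C₁ ^ (p - 1) * C₂) (fun x => (H x ^ (1 - p) * V x).toReal) := by
  have hp1 : 0 < p - 1 := by linarith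
  have hC₁' : (C₁ : ℝ≥0∞) ≠ 0 := by exact_mod_cast hC₁.ne'
  have hC₂' : (C₂ : ℝ≥0∞) ≠ 0 := by exact_mod_cast hC₂.ne'
  have hWt : ∀ᵐ x ∂μ, H x ^ (1 - p) * V x ≠ ∞ := by
    filter_upwards [hVt] with x hx
    refine ENNReal.mul_ne_top ?_ hx
    simp [(hH0 x).ne', hp.le]
  have hW0 : ∀ᵐ x ∂μ, H x ^ (1 - p) * V x ≠ 0 := by
    filter_upwards [hHt] with x hx
    refine mul_ne_zero ?_ (hV0 x).ne'
    exact (ENNReal.rpow_pos (hH0 x) hx).ne'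
  have hWof : (fun x => ENNReal.ofReal (H x ^ (1 - p) * V x).toReal) =ᵐ[μ]
      fun x => H x ^ (1 - p) * V x := by
    filter_upwards [hWt] with x hx
    exact ENNReal.ofReal_toReal hx
  have hWσ : (fun x => ENNReal.ofReal ((H x ^ (1 - p) * V x).toReal ^ (-1 / (p - 1)))) =ᵐ[μ]
      fun x => H x * V x ^ (-1 / (p - 1)) := by
    filter_upwards [hWt, hW0, hHt, hVt] with x hx hx0 hHx hVx
    rw [← ENNReal.ofReal_rpow_of_pos (ENNReal.toReal_pos hx0 hx), ENNReal.ofReal_toReal hx,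
      ENNReal.mul_rpow_of_ne_top (by simp [(hH0 x).ne', hp.le]) hVx, ← ENNReal.rpow_mul]
    congr 1
    have : (1 - p) * (-1 / (p - 1)) = 1 := by
      field_simp
      ring
    rw [this, ENNReal.rpow_one]
  -- Averages of a positive function finite a.e. which dominates its maximal function.
  have havg : ∀ {F : α → ℝ≥0∞} {C : ℝ≥0}, Measurable F → (∀ x, 0 < F x) → (∀ᵐ x ∂μ, F x ≠ ∞) →
      (∀ x, maxFn μ Q F x ≤ C * F x) → ∀ l x, 0 < l →
      (μ (Q l x))⁻¹ * ∫⁻ y in Q l x, F y ∂μ ≠ 0 ∧ (μ (Q l x))⁻¹ * ∫⁻ y in Q l x, F y ∂μ ≠ ∞ := by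
    intro F C hFm hF0 hFt hF l x hl
    constructor
    · refine mul_ne_zero (ENNReal.inv_ne_zero.2 (hμ.fin l x hl)) ?_
      rw [Ne, lintegral_eq_zero_iff hFm]
      intro h
      have : μ.restrict (Q l x) = 0 := by
        rw [← ae_eq_bot, ← Filter.eventually_false_iff_eq_bot]
        filter_upwards [h] with y hy using (hF0 y).ne' hy
      exact hμ.pos l x hl (Measure.restrict_eq_zero.1 this)
    · have hne : ∃ y ∈ Q l x, F y ≠ ∞ := by
        by_contra! hcon
        refine hμ.pos l x hl (measure_mono_null (fun y hy => ?_) hFt)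
        simpa using hcon y hy
      obtain ⟨y, hy, hyt⟩ := hne
      exact ne_top_of_le_ne_top (ENNReal.mul_ne_top ENNReal.coe_ne_top hyt)
        ((avg_le_maxFn hl hy).trans (hF y))
  have main : ∀ l x, 0 < l →
      avgE μ (Q l x) (fun x => (H x ^ (1 - p) * V x).toReal) ≤
        (((μ (Q l x))⁻¹ * ∫⁻ y in Q l x, H y ∂μ) / C₁) ^ (1 - p) *
          ((μ (Q l x))⁻¹ * ∫⁻ y in Q l x, V y ∂μ) := by
    intro l x hl
    obtain ⟨ha0, hat⟩ := havg hHm hH0 hHt hH l x hl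
    rw [avgE, lintegral_congr_ae (ae_restrict_of_ae hWof), mul_left_comm]
    refine mul_le_mul_right ?_ _
    rw [← lintegral_const_mul _ hVm]
    refine setLIntegral_mono' (hQ.isOpen l x).measurableSet fun y hy => ?_
    refine mul_le_mul_left ?_ _
    refine rpow_anti (by linarith) ?_
    refine ENNReal.div_le_of_le_mul' ?_
    exact (avg_le_maxFn hl hy).trans (hH y)
  refine ⟨⟨((hHm.pow_const _).mul hVm).ennreal_toReal, ?_, fun l hl x => ?_⟩, fun l hl x => ?_⟩
  · filter_upwards [hWt, hW0] with x hx hx0 using ENNReal.toReal_pos hx0 hx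
  · obtain ⟨ha0, hat⟩ := havg hHm hH0 hHt hH l x hl
    obtain ⟨hb0, hbt⟩ := havg hVm hV0 hVt hV l x hl
    have h1 := main l x hl
    have h2 : (((μ (Q l x))⁻¹ * ∫⁻ y in Q l x, H y ∂μ) / C₁) ^ (1 - p) *
          ((μ (Q l x))⁻¹ * ∫⁻ y in Q l x, V y ∂μ) ≠ ∞ := by
      refine ENNReal.mul_ne_top (ENNReal.rpow_ne_top_of_ne_zero ?_ ?_) hbt
      · exact (ENNReal.div_pos ha0 ENNReal.coe_ne_top).ne'
      · exact ENNReal.div_ne_top hat hC₁'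
    have h3 := ne_top_of_le_ne_top h2 h1
    rw [lt_top_iff_ne_top]
    intro h
    rw [avgE, h, ENNReal.mul_top (ENNReal.inv_ne_zero.2 (hμ.fin l x hl))] at h3
    exact h3 rfl
  · obtain ⟨ha0, hat⟩ := havg hHm hH0 hHt hH l x hl
    obtain ⟨hb0, hbt⟩ := havg hVm hV0 hVt hV l x hl
    have h1 := main l x hl
    set a := (μ (Q l x))⁻¹ * ∫⁻ y in Q l x, H y ∂μ with ha
    set b := (μ (Q l x))⁻¹ * ∫⁻ y in Q l x, V y ∂μ with hb
    have h2 : avgE μ (Q l x) (fun y => (H y ^ (1 - p) * V y).toReal ^ (-1 / (p - 1))) ≤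
        (b / C₂) ^ (-1 / (p - 1)) * a := by
      rw [avgE, lintegral_congr_ae (ae_restrict_of_ae hWσ), ha, mul_left_comm]
      refine mul_le_mul_right ?_ _
      rw [← lintegral_const_mul _ hHm]
      refine setLIntegral_mono' (hQ.isOpen l x).measurableSet fun y hy => ?_
      rw [mul_comm]
      refine mul_le_mul_left ?_ _
      refine rpow_anti ?_ ?_
      · exact div_nonpos_of_nonpos_of_nonneg (by norm_num) hp1.le
      refine ENNReal.div_le_of_le_mul' ?_
      exact (avg_le_maxFn hl hy).trans (hV y)
    have h3 : ((b / C₂) ^ (-1 / (p - 1)) * a) ^ (p - 1) = C₂ / b * a ^ (p - 1) := by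
      rw [ENNReal.mul_rpow_of_nonneg _ _ hp1.le, ← ENNReal.rpow_mul, div_mul_cancel₀ _ hp1.ne',
        ENNReal.rpow_neg_one, ENNReal.inv_div (Or.inl ENNReal.coe_ne_top) (Or.inl hC₂')]
    have h4 : (a / C₁) ^ (1 - p) * a ^ (p - 1) = (C₁ : ℝ≥0∞) ^ (p - 1) := by
      rw [← neg_sub, ENNReal.rpow_neg, ← ENNReal.inv_rpow,
        ENNReal.inv_div (Or.inl ENNReal.coe_ne_top) (Or.inl hC₁'),
        ← ENNReal.mul_rpow_of_nonneg _ _ hp1.le, ENNReal.div_mul_cancel ha0 hat]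
    calc _ ≤ ((a / C₁) ^ (1 - p) * b) * ((b / C₂) ^ (-1 / (p - 1)) * a) ^ (p - 1) :=
          mul_le_mul' h1 (ENNReal.rpow_le_rpow h2 hp1.le)
      _ = ((a / C₁) ^ (1 - p) * a ^ (p - 1)) * (C₂ / b * b) := by rw [h3]; ring
      _ = _ := by
          rw [h4, ENNReal.div_mul_cancel hb0 hbt]
          push_cast
          rw [ENNReal.coe_rpow_of_nonneg _ hp1.le]

/-- Hölder's inequality with the weight `H ^ (1 - p) * V`: a weighted `L_p` bound of `f` by some
`g ≤ H` yields a bound of `∫ f V`. -/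
lemma lintegral_mul_le_of_weight (hpp : p.HolderConjugate p') {f g H V : α → ℝ≥0∞}
    (hf : Measurable f) (hHm : Measurable H) (hVm : Measurable V)
    (hH0 : ∀ x, 0 < H x) (hV0 : ∀ x, 0 < V x) (hHt : ∀ᵐ x ∂μ, H x ≠ ∞) (hVt : ∀ᵐ x ∂μ, V x ≠ ∞)
    (hgH : ∀ x, g x ≤ H x)
    (hfg : ∫⁻ x, f x ^ p * ENNReal.ofReal (H x ^ (1 - p) * V x).toReal ∂μ ≤
      ∫⁻ x, g x ^ p * ENNReal.ofReal (H x ^ (1 - p) * V x).toReal ∂μ) :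
    ∫⁻ x, f x * V x ∂μ ≤ ∫⁻ x, H x * V x ∂μ := by
  have hp := hpp.pos
  have hp' := hpp.symm.pos
  have hp1 := hpp.lt
  have hsum : 1 / p + 1 / p' = 1 := by simpa using hpp.inv_add_inv_eq_one
  have hWt : ∀ᵐ x ∂μ, ENNReal.ofReal (H x ^ (1 - p) * V x).toReal = H x ^ (1 - p) * V x := by
    filter_upwards [hVt] with x hx
    refine ENNReal.ofReal_toReal (ENNReal.mul_ne_top ?_ hx)
    simp [(hH0 x).ne', hp1.le]
  have hWm : Measurable fun x => H x ^ (1 - p) * V x := (hHm.pow_const _).mul hVm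
  set J := ∫⁻ x, H x * V x ∂μ with hJ
  have e1 : ∫⁻ x, f x * V x ∂μ = ∫⁻ x, ((fun x => f x * (H x ^ (1 - p) * V x) ^ (1 / p)) *
      fun x => (H x * V x) ^ (1 / p')) x ∂μ := by
    refine lintegral_congr_ae ?_
    filter_upwards [hHt, hVt] with x hHx hVx
    have h0 := (hH0 x).ne'
    rw [Pi.mul_apply, mul_assoc, ENNReal.mul_rpow_of_ne_top (by simp [h0, hp1.le]) hVx,
      ENNReal.mul_rpow_of_ne_top hHx hVx, ← ENNReal.rpow_mul]
    have e2 : H x ^ ((1 - p) * (1 / p)) * H x ^ (1 / p') = 1 := by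
      rw [← ENNReal.rpow_add _ _ h0 hHx]
      have : (1 - p) * (1 / p) + 1 / p' = 0 := by
        rw [sub_mul, mul_one_div_cancel hp.ne']
        linarith
      rw [this, ENNReal.rpow_zero]
    have e3 : V x ^ (1 / p) * V x ^ (1 / p') = V x := by
      rw [← ENNReal.rpow_add _ _ (hV0 x).ne' hVx, hsum, ENNReal.rpow_one]
    calc f x * V x = f x * ((H x ^ ((1 - p) * (1 / p)) * H x ^ (1 / p')) *
          (V x ^ (1 / p) * V x ^ (1 / p'))) := by rw [e2, e3, one_mul]
      _ = _ := by ring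
  have e4 : ∫⁻ x, (f x * (H x ^ (1 - p) * V x) ^ (1 / p)) ^ p ∂μ ≤ J := by
    calc _ = ∫⁻ x, f x ^ p * ENNReal.ofReal (H x ^ (1 - p) * V x).toReal ∂μ := by
          refine lintegral_congr_ae ?_
          filter_upwards [hWt] with x hx
          rw [hx, ENNReal.mul_rpow_of_nonneg _ _ hp.le, ← ENNReal.rpow_mul,
            one_div_mul_cancel hp.ne', ENNReal.rpow_one]
      _ ≤ _ := hfg
      _ ≤ J := by
          refine lintegral_mono_ae ?_
          filter_upwards [hWt, hHt] with x hx hHx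
          rw [hx]
          calc g x ^ p * (H x ^ (1 - p) * V x) ≤ H x ^ p * (H x ^ (1 - p) * V x) := by
                gcongr; exact hgH x
            _ = H x * V x := by
                rw [← mul_assoc, ← ENNReal.rpow_add _ _ (hH0 x).ne' hHx, add_sub_cancel,
                  ENNReal.rpow_one]
  rw [e1]
  refine (ENNReal.lintegral_mul_le_Lp_mul_Lq μ hpp
    (show Measurable fun x => f x * (H x ^ (1 - p) * V x) ^ (1 / p) from
      hf.mul (hWm.pow_const _)).aemeasurable
    (show Measurable fun x => (H x * V x) ^ (1 / p') from
      (hHm.mul hVm).pow_const _).aemeasurable).trans ?_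
  have e5 : ∫⁻ x, ((H x * V x) ^ (1 / p')) ^ p' ∂μ = J := by
    refine lintegral_congr fun x => ?_
    rw [← ENNReal.rpow_mul, one_div_mul_cancel hp'.ne', ENNReal.rpow_one]
  rw [e5]
  calc _ ≤ J ^ (1 / p) * J ^ (1 / p') := by gcongr
    _ = J := by
        rw [← ENNReal.rpow_add_of_nonneg _ _ (by positivity) (by positivity), hsum,
          ENNReal.rpow_one]

/-- Hölder's inequality for the duality between `L_q(ω)` and `L_{q'}(σ)`. -/
lemma ApPair.lintegral_mul_le (h : ApPair μ Q q q' K ω σ) {H V : α → ℝ≥0∞} (hHm : Measurable H)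
    (hVm : Measurable V) :
    ∫⁻ x, H x * V x ∂μ ≤
      (∫⁻ x, H x ^ q * ω x ∂μ) ^ (1 / q) * (∫⁻ x, V x ^ q' * σ x ∂μ) ^ (1 / q') := by
  have hq := h.conj.pos
  have hq' := h.conj.symm.pos
  have := ENNReal.lintegral_mul_le_Lp_mul_Lq μ h.conj
    (hHm.mul (h.meas_left.pow_const (1 / q))).aemeasurable
    (hVm.mul (h.meas_right.pow_const (1 / q'))).aemeasurable
  simp only [Pi.mul_apply, ENNReal.mul_rpow_of_nonneg _ _ hq.le,
    ENNReal.mul_rpow_of_nonneg _ _ hq'.le, ← ENNReal.rpow_mul, one_div_mul_cancel hq.ne',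
    one_div_mul_cancel hq'.ne', ENNReal.rpow_one] at this
  refine le_trans (le_of_eq (lintegral_congr fun x => ?_)) this
  rw [mul_mul_mul_comm, h.mul_eq, mul_one]

lemma ae_ne_top_of_Lp (hωm : Measurable ω) (hω0 : ∀ x, ω x ≠ 0) (hq : 0 < q) {H : α → ℝ≥0∞}
    (hH : Measurable H) (h : (∫⁻ x, H x ^ q * ω x ∂μ) ^ (1 / q) ≠ ∞) : ∀ᵐ x ∂μ, H x ≠ ∞ := by
  have h1 : ∫⁻ x, H x ^ q * ω x ∂μ ≠ ∞ := by
    intro h0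
    rw [h0, ENNReal.top_rpow_of_pos (one_div_pos.2 hq)] at h
    exact h rfl
  filter_upwards [ae_lt_top (show Measurable fun x => H x ^ q * ω x from
    (hH.pow_const _).mul hωm) h1] with x hx hx'
  rw [hx', ENNReal.top_rpow_of_pos hq, ENNReal.top_mul (hω0 x)] at hx
  exact lt_irrefl _ hx

/-- Extrapolation from `L_p` to `L_q`, with constant `2`. By duality, `‖f‖_q` is `∫ f v` for some `v`
in the unit ball of `L_{q'}(σ)`; replacing `g` and `v` by `A_1` majorants `H` and `V`, the hypothesis
for the weight `H ^ (1 - p) * V` gives `∫ f v ≤ ∫ H V`. The majorants cost `(4 / 3) * (4 / 3)`, and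
`9 / 8` is the slack that leads to the strict inequality required by `rubio`. -/
lemma extrapolation [SigmaFinite μ] (hQ : BoxFamily Q) (hμ : BoxDoubling μ Q D)
    (hp : 1 < p) (hqq : q.HolderConjugate q') (K : ℝ≥0) :
    ∃ Kp : ℝ≥0, 0 < Kp ∧ ∀ ω σ, ApPair μ Q q q' K ω σ →
      ∀ f g : α → ℝ≥0∞, Measurable f → Measurable g →
      (∀ W : α → ℝ, IsAp μ Q p Kp W →
        ∫⁻ x, f x ^ p * ENNReal.ofReal (W x) ∂μ ≤ ∫⁻ x, g x ^ p * ENNReal.ofReal (W x) ∂μ) →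
      (∫⁻ x, f x ^ q * ω x ∂μ) ^ (1 / q) ≤ 2 * (∫⁻ x, g x ^ q * ω x ∂μ) ^ (1 / q) := by
  have hq := hqq.pos
  have hq' := hqq.symm.pos
  have hq1 := hqq.lt
  have hsum : 1 / q + 1 / q' = 1 := by simpa using hqq.inv_add_inv_eq_one
  obtain ⟨C₁, hC₁, hR₁⟩ := rubio hQ hμ hqq K
  obtain ⟨C₂, hC₂, hR₂⟩ := rubio hQ hμ hqq.symm K
  refine ⟨C₁ ^ (p - 1) * C₂, mul_pos (NNReal.rpow_pos hC₁) hC₂,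
    fun ω σ h f g hf hg hfg => ?_⟩
  by_cases hgt : (∫⁻ x, g x ^ q * ω x ∂μ) ^ (1 / q) = ∞
  · rw [hgt]; simp
  -- The bound for functions of finite norm.
  have key : ∀ f : α → ℝ≥0∞, Measurable f → (∀ W : α → ℝ, IsAp μ Q p (C₁ ^ (p - 1) * C₂) W →
        ∫⁻ x, f x ^ p * ENNReal.ofReal (W x) ∂μ ≤ ∫⁻ x, g x ^ p * ENNReal.ofReal (W x) ∂μ) →
      ∫⁻ x, f x ^ q * ω x ∂μ ≠ ∞ →
      (∫⁻ x, f x ^ q * ω x ∂μ) ^ (1 / q) ≤ 2 * (∫⁻ x, g x ^ q * ω x ∂μ) ^ (1 / q) := by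
    intro f hf hfg hft
    set I := ∫⁻ x, f x ^ q * ω x ∂μ with hI
    by_cases hI0 : I = 0
    · rw [hI0, ENNReal.zero_rpow_of_pos (by positivity)]; exact zero_le
    -- `v` is the extremal function in the duality between `L_q(ω)` and `L_{q'}(σ)`.
    let v : α → ℝ≥0∞ := fun x => f x ^ (q - 1) * ω x
    have hvm : Measurable v := (hf.pow_const _).mul h.meas_left
    have hvN : ∫⁻ x, v x ^ q' * σ x ∂μ = I := by
      refine lintegral_congr fun x => ?_
      simp only [v]
      rw [ENNReal.mul_rpow_of_nonneg _ _ hq'.le, ← ENNReal.rpow_mul, hqq.sub_one_mul_conj,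
        mul_assoc, ← h.rpow_eq x, ← ENNReal.rpow_add _ _ (h.ne_zero x) (h.ne_top x),
        add_sub_cancel, ENNReal.rpow_one]
    have hfv : ∫⁻ x, f x * v x ∂μ = I := by
      refine lintegral_congr fun x => ?_
      simp only [v]
      have := ENNReal.rpow_add_of_nonneg (x := f x) 1 (q - 1) zero_le_one (by linarith)
      rw [add_sub_cancel, ENNReal.rpow_one] at this
      rw [← mul_assoc, this]
    have hI1 : I ^ (1 / q') ≠ 0 := (ENNReal.rpow_pos (pos_iff_ne_zero.2 hI0) hft).ne'
    have hI2 : I ^ (1 / q') ≠ ∞ := ENNReal.rpow_ne_top_of_nonneg (by positivity) hft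
    obtain ⟨V, hVm, hvV, hV0, hVN, hVM⟩ := hR₂ σ ω h.symm v hvm
      (ENNReal.ofReal (9 / 8) * I ^ (1 / q')) (by
        rw [hvN]
        conv_lhs => rw [← one_mul (I ^ (1 / q'))]
        refine (ENNReal.mul_lt_mul_iff_left hI1 hI2).2 ?_
        rw [ENNReal.one_lt_ofReal]
        norm_num)
    have hVt := ae_ne_top_of_Lp h.meas_right h.symm.ne_zero hq' hVm
      (ne_top_of_le_ne_top (ENNReal.mul_ne_top ENNReal.ofReal_ne_top
        (ENNReal.mul_ne_top ENNReal.ofReal_ne_top hI2)) hVN)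
    have h1 : I ^ (1 / q) / 2 ≤ (∫⁻ x, g x ^ q * ω x ∂μ) ^ (1 / q) := by
      refine le_of_forall_gt_imp_ge_of_dense fun B hB => ?_
      by_cases hBt : B = ∞
      · rw [hBt]; exact le_top
      obtain ⟨H, hHm, hgH, hH0, hHN, hHM⟩ := hR₁ ω σ h g hg B hB
      have hHt := ae_ne_top_of_Lp h.meas_left h.ne_zero hq hHm
        (ne_top_of_le_ne_top (ENNReal.mul_ne_top ENNReal.ofReal_ne_top hBt) hHN)
      have hW := hfg _ (isAp_of_A1 hQ hμ hp hC₁ hC₂ hHm hVm hH0 hV0 hHt hVt hHM hVM)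
      have h2 : I ^ (1 / q) * I ^ (1 / q') ≤ (2 * B) * I ^ (1 / q') := by
        calc I ^ (1 / q) * I ^ (1 / q') = I := by
              rw [← ENNReal.rpow_add_of_nonneg _ _ (by positivity) (by positivity), hsum,
                ENNReal.rpow_one]
          _ = ∫⁻ x, f x * v x ∂μ := hfv.symm
          _ ≤ ∫⁻ x, f x * V x ∂μ := lintegral_mono fun x => mul_le_mul_right (hvV x) _
          _ ≤ ∫⁻ x, H x * V x ∂μ := lintegral_mul_le_of_weight
              (Real.HolderConjugate.conjExponent hp) hf hHm hVm hH0 hV0 hHt hVt hgH hW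
          _ ≤ _ := h.lintegral_mul_le hHm hVm
          _ ≤ (ENNReal.ofReal (4 / 3) * B) *
              (ENNReal.ofReal (4 / 3) * (ENNReal.ofReal (9 / 8) * I ^ (1 / q'))) :=
              mul_le_mul' hHN hVN
          _ = (ENNReal.ofReal (4 / 3) * ENNReal.ofReal (4 / 3) * ENNReal.ofReal (9 / 8)) * B *
              I ^ (1 / q') := by ring
          _ = _ := by
              rw [← ENNReal.ofReal_mul (by norm_num), ← ENNReal.ofReal_mul (by norm_num)]
              norm_num
      exact ENNReal.div_le_of_le_mul' ((ENNReal.mul_le_mul_iff_left hI1 hI2).1 h2)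
    rw [mul_comm]
    exact (ENNReal.div_le_iff_le_mul (by simp) (by simp)).1 h1
  -- Truncation by multiples of a positive function of finite norm.
  obtain ⟨u, hum, hu0, hu⟩ := exists_pos_small h.meas_left h.ne_top hq one_ne_zero (μ := μ)
  have hu' : ∫⁻ x, u x ^ q * ω x ∂μ ≠ ∞ := by
    intro h0
    rw [h0, ENNReal.top_rpow_of_pos (by positivity)] at hu
    exact not_top_lt hu
  let fn : ℕ → α → ℝ≥0∞ := fun n x => min (f x) (n * u x)
  have hfnm : ∀ n, Measurable (fn n) := fun n => hf.min (hum.const_mul _)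
  have hlim : Tendsto (fun n => ∫⁻ x, fn n x ^ q * ω x ∂μ) atTop
      (nhds (∫⁻ x, f x ^ q * ω x ∂μ)) := by
    refine lintegral_tendsto_of_tendsto_of_monotone
      (fun n => (((hfnm n).pow_const _).mul h.meas_left).aemeasurable)
      (ae_of_all _ fun x m n hmn => ?_) (ae_of_all _ fun x => ?_)
    · refine mul_le_mul_left (ENNReal.rpow_le_rpow ?_ hq.le) _
      refine min_le_min le_rfl (mul_le_mul_left ?_ _)
      exact_mod_cast hmn
    · refine ENNReal.Tendsto.mul_const ?_ (Or.inr (h.ne_top x))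
      refine (ENNReal.continuous_rpow_const.tendsto _).comp ?_
      have h1 : Tendsto (fun n : ℕ => (n : ℝ≥0∞) * u x) atTop (nhds (∞ * u x)) :=
        ENNReal.Tendsto.mul_const ENNReal.tendsto_nat_nhds_top (Or.inl ENNReal.top_ne_zero)
      rw [ENNReal.top_mul (hu0 x).ne'] at h1
      simpa using (tendsto_const_nhds (x := f x)).min h1
  refine le_of_tendsto' ((ENNReal.continuous_rpow_const.tendsto _).comp hlim) fun n => ?_
  refine key (fn n) (hfnm n) (fun W hW => le_trans ?_ (hfg W hW)) ?_
  · refine lintegral_mono fun x => mul_le_mul_left (ENNReal.rpow_le_rpow (min_le_left _ _) ?_) _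
    linarith
  · refine ne_top_of_le_ne_top (ENNReal.mul_ne_top (ENNReal.rpow_ne_top_of_nonneg hq.le
      (ENNReal.natCast_ne_top n)) hu') ?_
    rw [← lintegral_const_mul _ (show Measurable fun x => u x ^ q * ω x from
      (hum.pow_const _).mul h.meas_left)]
    refine lintegral_mono fun x => ?_
    rw [← mul_assoc, ← ENNReal.mul_rpow_of_nonneg _ _ hq.le]
    exact mul_le_mul_left (ENNReal.rpow_le_rpow (min_le_right _ _) hq.le) _

end Extrapolation

/-! ### From weights to pairs of dual weights -/

section Weights

variable {α : Type*} [TopologicalSpace α] [SecondCountableTopology α] [MeasurableSpace α]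
  [BorelSpace α] {Q : ℝ → α → Set α} {μ : Measure α} {D K : ℝ≥0} {p q q' : ℝ}

/-- A real `A_q`-weight agrees almost everywhere with the first member of a pair of dual
weights. -/
lemma IsAp.exists_apPair (hμ : BoxDoubling μ Q D) (hqq : q.HolderConjugate q') {w : α → ℝ}
    (hw : IsAp μ Q q K w) : ∃ ω σ : α → ℝ≥0∞, ApPair μ Q q q' (K ^ (1 / q)) ω σ ∧
      (fun x => ENNReal.ofReal (w x)) =ᵐ[μ] ω := by
  classical
  have hq := hqq.pos
  have hq' := hqq.symm.pos
  have hq1 : 0 < q - 1 := by linarith [hqq.lt]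
  obtain ⟨⟨hwm, hwpos, hwfin⟩, hwA⟩ := hw
  let w₁ : α → ℝ := fun x => if 0 < w x then w x else 1
  have hw₁ : ∀ x, 0 < w₁ x := fun x => by simp only [w₁]; split_ifs with h <;> simp [h]
  have hw₁m : Measurable w₁ :=
    Measurable.ite (measurableSet_lt measurable_const hwm) hwm measurable_const
  have hae : ∀ᵐ x ∂μ, w x = w₁ x := by
    filter_upwards [hwpos] with x hx
    simp [w₁, hx]
  refine ⟨fun x => ENNReal.ofReal (w₁ x), fun x => ENNReal.ofReal (w₁ x ^ (-1 / (q - 1))),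
    ⟨hqq, hw₁m.ennreal_ofReal, (hw₁m.pow_const _).ennreal_ofReal, fun x => ?_,
      fun l x hl => ?_⟩, ?_⟩
  · have h0 : ENNReal.ofReal (w₁ x) ≠ 0 := by simpa using hw₁ x
    rw [← ENNReal.ofReal_rpow_of_pos (hw₁ x), ← ENNReal.rpow_mul,
      ← ENNReal.rpow_add _ _ h0 ENNReal.ofReal_ne_top]
    have : 1 / q + -1 / (q - 1) * (1 / q') = 0 := by
      have := hqq.inv_add_inv_eq_one
      rw [one_div q', ← hqq.one_sub_inv]
      field_simp
      ring
    rw [this, ENNReal.rpow_zero]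
  · have h1 := hwA l hl x
    have e1 : ∫⁻ y in Q l x, ENNReal.ofReal (w y) ∂μ =
        ∫⁻ y in Q l x, ENNReal.ofReal (w₁ y) ∂μ :=
      lintegral_congr_ae (ae_restrict_of_ae (by filter_upwards [hae] with y hy; rw [hy]))
    have e2 : ∫⁻ y in Q l x, ENNReal.ofReal (w y ^ (-1 / (q - 1))) ∂μ =
        ∫⁻ y in Q l x, ENNReal.ofReal (w₁ y ^ (-1 / (q - 1))) ∂μ :=
      lintegral_congr_ae (ae_restrict_of_ae (by filter_upwards [hae] with y hy; rw [hy]))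
    rw [avgE, avgE, e1, e2] at h1
    set A := ∫⁻ y in Q l x, ENNReal.ofReal (w₁ y) ∂μ
    set B := ∫⁻ y in Q l x, ENNReal.ofReal (w₁ y ^ (-1 / (q - 1))) ∂μ
    have hm0 := hμ.pos l x hl
    have hmt := hμ.fin l x hl
    set m := μ (Q l x)
    have h2 := ENNReal.rpow_le_rpow h1 (show 0 ≤ 1 / q by positivity)
    have hqq1 : (q - 1) * (1 / q) = 1 / q' := by
      rw [one_div q', ← hqq.one_sub_inv]
      field_simp
    rw [ENNReal.mul_rpow_of_nonneg _ _ (by positivity), ← ENNReal.rpow_mul, hqq1,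
      ENNReal.mul_rpow_of_nonneg _ _ (by positivity), ENNReal.mul_rpow_of_nonneg _ _
      (by positivity)] at h2
    have hm : m⁻¹ ^ (1 / q) * m⁻¹ ^ (1 / q') = m⁻¹ := by
      rw [← ENNReal.rpow_add_of_nonneg _ _ (by positivity) (by positivity)]
      have : 1 / q + 1 / q' = 1 := by simpa using hqq.inv_add_inv_eq_one
      rw [this, ENNReal.rpow_one]
    rw [mul_mul_mul_comm, hm] at h2
    rw [ENNReal.coe_rpow_of_nonneg _ (by positivity), mul_comm _ m]
    exact (ENNReal.inv_mul_le_iff hm0 hmt).1 h2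
  · filter_upwards [hae] with x hx
    rw [hx]

/-- `extrapolation` for real weights. -/
lemma extrapolation_isAp [SigmaFinite μ] (hQ : BoxFamily Q) (hμ : BoxDoubling μ Q D)
    (hp : 1 < p) (hq : 1 < q) (K : ℝ≥0) :
    ∃ Kp : ℝ≥0, 0 < Kp ∧ ∀ w, IsAp μ Q q K w →
      ∀ f g : α → ℝ≥0∞, Measurable f → Measurable g →
      (∀ W : α → ℝ, IsAp μ Q p Kp W →
        ∫⁻ x, f x ^ p * ENNReal.ofReal (W x) ∂μ ≤ ∫⁻ x, g x ^ p * ENNReal.ofReal (W x) ∂μ) →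
      (∫⁻ x, f x ^ q * ENNReal.ofReal (w x) ∂μ) ^ (1 / q) ≤
        2 * (∫⁻ x, g x ^ q * ENNReal.ofReal (w x) ∂μ) ^ (1 / q) := by
  have hqq := Real.HolderConjugate.conjExponent hq
  obtain ⟨Kp, hKp, h⟩ := extrapolation hQ hμ hp hqq (K ^ (1 / q))
  refine ⟨Kp, hKp, fun w hw f g hf hg hfg => ?_⟩
  obtain ⟨ω, σ, hωσ, hae⟩ := hw.exists_apPair hμ hqq
  have e : ∀ f : α → ℝ≥0∞, ∫⁻ x, f x ^ q * ENNReal.ofReal (w x) ∂μ = ∫⁻ x, f x ^ q * ω x ∂μ :=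
    fun f => lintegral_congr_ae (by filter_upwards [hae] with x hx; rw [hx])
  rw [e, e]
  exact h ω σ hωσ f g hf hg hfg

end Weights

/-! ### Anisotropic boxes and their products -/

section Boxes

lemma boxFamily_qBox {d : ℕ} {k : Fin d → ℕ} (hk : ∀ j, 1 ≤ k j) : BoxFamily (qBox d k) where
  isOpen l x := by
    have : qBox d k l x = ⋂ j, {y | |y j - x j| < l ^ (k j) / 2} := by
      ext y
      simp [qBox]
    rw [this]
    exact isOpen_iInter_of_finite fun j => isOpen_lt (by fun_prop) continuous_const
  mem l x hl j := by
    rw [sub_self, abs_zero]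
    positivity
  engulf l l' x x' hl hl' hll := by
    rintro ⟨z, hz, hz'⟩ y hy j
    have h1 := abs_lt.1 (hz j)
    have h2 := abs_lt.1 (hz' j)
    have h3 := abs_lt.1 (hy j)
    have hpow : (l ^ k j) ≤ (2 * l') ^ k j := by gcongr
    have h4 : ∀ a : ℝ, 1 ≤ a → a * l' ^ k j ≤ (a * l') ^ k j := fun a ha => by
      rw [mul_pow]
      gcongr
      exact le_self_pow₀ ha (by have := hk j; omega)
    have h5 : 4 * (2 * l') ^ k j ≤ (8 * l') ^ k j := by
      calc _ ≤ 4 ^ k j * (2 * l') ^ k j := by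
            gcongr
            exact le_self_pow₀ (by norm_num) (by have := hk j; omega)
        _ = _ := by rw [← mul_pow]; ring
    have h6 := h4 2 (by norm_num)
    have h7 : 0 < l' ^ k j := by positivity
    rw [abs_lt]
    constructor <;> linarith

lemma boxDoubling_qBox {d : ℕ} {k : Fin d → ℕ} {μ : Measure (Fin d → ℝ)}
    [IsFiniteMeasureOnCompacts μ] {N : ℝ≥0}
    (h : ∀ l : ℝ, 0 < l → ∀ x, 0 < μ (qBox d k (2 * l) x) ∧
      μ (qBox d k (2 * l) x) ≤ (N : ℝ≥0∞) * μ (qBox d k l x)) :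
    BoxDoubling μ (qBox d k) (N ^ 3) where
  pos l x hl := by
    have := (h (l / 2) (by positivity) x).1
    rw [mul_div_cancel₀ _ (two_ne_zero)] at this
    exact this.ne'
  fin l x hl := by
    have hc : IsCompact (Set.Icc (fun j => x j - l ^ k j / 2) (fun j => x j + l ^ k j / 2)) :=
      isCompact_Icc
    have hs : qBox d k l x ⊆
        Set.Icc (fun j => x j - l ^ k j / 2) (fun j => x j + l ^ k j / 2) := fun y hy =>
      ⟨fun j => by linarith [abs_lt.1 (hy j)], fun j => by linarith [abs_lt.1 (hy j)]⟩
    exact ((measure_mono hs).trans_lt hc.measure_lt_top).ne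
  le l x hl := by
    have e : 8 * l = 2 * (2 * (2 * l)) := by ring
    rw [e]
    calc _ ≤ (N : ℝ≥0∞) * (N * (N * μ (qBox d k l x))) :=
          ((h _ (by positivity) x).2).trans (mul_le_mul_right
            (((h _ (by positivity) x).2).trans (mul_le_mul_right (h l hl x).2 _)) _)
      _ = _ := by push_cast; ring

variable {α β : Type*} [TopologicalSpace α] [TopologicalSpace β]
  {Q : ℝ → α → Set α} {R : ℝ → β → Set β} {D E : ℝ≥0}

lemma BoxFamily.prod (hQ : BoxFamily Q) (hR : BoxFamily R) :
    BoxFamily (fun l (z : α × β) => Q l z.1 ×ˢ R l z.2) where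
  isOpen l z := (hQ.isOpen l z.1).prod (hR.isOpen l z.2)
  mem l z hl := ⟨hQ.mem l z.1 hl, hR.mem l z.2 hl⟩
  engulf l l' z z' hl hl' hll := by
    rintro ⟨y, hy, hy'⟩
    exact Set.prod_mono (hQ.engulf l l' _ _ hl hl' hll ⟨y.1, hy.1, hy'.1⟩)
      (hR.engulf l l' _ _ hl hl' hll ⟨y.2, hy.2, hy'.2⟩)

variable [MeasurableSpace α] [MeasurableSpace β] {μ : Measure α} {ν : Measure β} [SigmaFinite μ]
  [SigmaFinite ν]

lemma BoxDoubling.prod (hμ : BoxDoubling μ Q D) (hν : BoxDoubling ν R E) :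
    BoxDoubling (μ.prod ν) (fun l (z : α × β) => Q l z.1 ×ˢ R l z.2) (D * E) where
  pos l z hl := by
    rw [Measure.prod_prod]
    exact mul_ne_zero (hμ.pos l _ hl) (hν.pos l _ hl)
  fin l z hl := by
    rw [Measure.prod_prod]
    exact ENNReal.mul_ne_top (hμ.fin l _ hl) (hν.fin l _ hl)
  le l z hl := by
    rw [Measure.prod_prod, Measure.prod_prod, ENNReal.coe_mul, mul_mul_mul_comm]
    exact mul_le_mul' (hμ.le l _ hl) (hν.le l _ hl)

lemma setLIntegral_prod_mul {s : Set α} {t : Set β} {w : α → ℝ} {W : β → ℝ} {u : α × β → ℝ}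
    (hw : Measurable w) (hW : Measurable W) (hw0 : ∀ᵐ x ∂μ, 0 < w x)
    (hu : ∀ᵐ z ∂(μ.prod ν), u z = w z.1 * W z.2) :
    ∫⁻ z in s ×ˢ t, ENNReal.ofReal (u z) ∂(μ.prod ν) =
      (∫⁻ x in s, ENNReal.ofReal (w x) ∂μ) * ∫⁻ y in t, ENNReal.ofReal (W y) ∂ν := by
  have h0 : ∀ᵐ z ∂(μ.prod ν), 0 < w z.1 := Measure.quasiMeasurePreserving_fst.ae hw0
  rw [← lintegral_prod_mul hw.ennreal_ofReal.aemeasurable hW.ennreal_ofReal.aemeasurable,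
    Measure.prod_restrict]
  refine lintegral_congr_ae (ae_restrict_of_ae ?_)
  filter_upwards [h0, hu] with z hz hz'
  rw [hz', ENNReal.ofReal_mul hz.le]

/-- The average of a product over a product box is the product of the averages. -/
lemma avgE_prod {s : Set α} {t : Set β} (hs : μ s ≠ 0) (hs' : μ s ≠ ∞) {w : α → ℝ} {W : β → ℝ}
    {u : α × β → ℝ} (hw : Measurable w) (hW : Measurable W) (hw0 : ∀ᵐ x ∂μ, 0 < w x)
    (hu : ∀ᵐ z ∂(μ.prod ν), u z = w z.1 * W z.2) :
    avgE (μ.prod ν) (s ×ˢ t) u = avgE μ s w * avgE ν t W := by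
  rw [avgE, avgE, avgE, setLIntegral_prod_mul hw hW hw0 hu, Measure.prod_prod,
    ENNReal.mul_inv (Or.inl hs) (Or.inl hs'), mul_mul_mul_comm]

/-- Products of `A_p`-weights are `A_p`-weights with respect to product boxes. -/
lemma IsAp.prod (hμ : BoxDoubling μ Q D) {p : ℝ} (hp : 1 < p) {K L : ℝ≥0} {w : α → ℝ} {W : β → ℝ}
    (hw : IsAp μ Q p K w) (hW : IsAp ν R p L W) :
    IsAp (μ.prod ν) (fun l z => Q l z.1 ×ˢ R l z.2) p (K * L) (fun z => w z.1 * W z.2) := by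
  obtain ⟨⟨hwm, hw0, hwt⟩, hwA⟩ := hw
  obtain ⟨⟨hWm, hW0, hWt⟩, hWA⟩ := hW
  have h0 : ∀ᵐ z ∂(μ.prod ν), 0 < w z.1 := Measure.quasiMeasurePreserving_fst.ae hw0
  have h1 : ∀ᵐ z ∂(μ.prod ν), 0 < W z.2 := Measure.quasiMeasurePreserving_snd.ae hW0
  refine ⟨⟨(hwm.comp measurable_fst).mul (hWm.comp measurable_snd), ?_, fun l hl z => ?_⟩,
    fun l hl z => ?_⟩
  · filter_upwards [h0, h1] with z hz hz' using mul_pos hz hz'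
  · rw [setLIntegral_prod_mul hwm hWm hw0 (ae_of_all _ fun z => rfl)]
    exact ENNReal.mul_lt_top (hwt l hl _) (hWt l hl _)
  · have hs := hμ.pos l z.1 hl
    have ht := hμ.fin l z.1 hl
    have e1 := avgE_prod (t := R l z.2) (ν := ν) hs ht (u := fun z => w z.1 * W z.2) hwm hWm hw0
      (ae_of_all _ fun z => rfl)
    have e2 := avgE_prod (t := R l z.2) (ν := ν) hs ht
      (u := fun z => (w z.1 * W z.2) ^ (-1 / (p - 1))) (hwm.pow_const (-1 / (p - 1)))
      (hWm.pow_const (-1 / (p - 1)))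
      (by filter_upwards [hw0] with x hx using Real.rpow_pos_of_pos hx _)
      (by filter_upwards [h0, h1] with y hy hy' using Real.mul_rpow hy.le hy'.le)
    rw [e1, e2, ENNReal.mul_rpow_of_nonneg _ _ (by linarith), mul_mul_mul_comm, ENNReal.coe_mul]
    exact mul_le_mul' (hwA l hl _) (hWA l hl _)

end Boxes

/-! ### The mixed-norm theorem -/

/-- **Dong–Kim mixed-norm extrapolation theorem.** -/
theorem dong_kim_mixed_norm_extrapolation
    (d' d'' : ℕ) (hd' : 1 ≤ d') (hd'' : 1 ≤ d'')
    (k' : Fin d' → ℕ) (k'' : Fin d'' → ℕ) (hk' : ∀ j, 1 ≤ k' j) (hk'' : ∀ j, 1 ≤ k'' j)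
    (N₀' N₀'' : ℝ≥0)
    (μ' : Measure (Fin d' → ℝ)) (μ'' : Measure (Fin d'' → ℝ))
    [IsFiniteMeasureOnCompacts μ'] [IsFiniteMeasureOnCompacts μ'']
    [SigmaFinite μ'] [SigmaFinite μ'']
    (hdb' : ∀ l : ℝ, 0 < l → ∀ x, 0 < μ' (qBox d' k' (2 * l) x) ∧
      μ' (qBox d' k' (2 * l) x) ≤ (N₀' : ℝ≥0∞) * μ' (qBox d' k' l x))
    (hdb'' : ∀ l : ℝ, 0 < l → ∀ x, 0 < μ'' (qBox d'' k'' (2 * l) x) ∧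
      μ'' (qBox d'' k'' (2 * l) x) ≤ (N₀'' : ℝ≥0∞) * μ'' (qBox d'' k'' l x))
    (K' K'' : ℝ≥0) (hK' : 1 < K') (hK'' : 1 < K'')
    (p p' p'' : ℝ) (hp : 1 < p) (hp' : 1 < p') (hp'' : 1 < p'') :
    ∃ Kp : ℝ≥0, 0 < Kp ∧
      ∀ (w' : (Fin d' → ℝ) → ℝ) (w'' : (Fin d'' → ℝ) → ℝ),
        IsAp μ' (qBox d' k') p' K' w' → IsAp μ'' (qBox d'' k'') p'' K'' w'' →
        ∀ f g : (Fin d' → ℝ) × (Fin d'' → ℝ) → ℝ, Measurable f → Measurable g →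
          (∀ z, 0 ≤ f z) → (∀ z, 0 ≤ g z) →
          (∀ w : (Fin d' → ℝ) × (Fin d'' → ℝ) → ℝ,
            IsAp (μ'.prod μ'') (fun l z => qBox d' k' l z.1 ×ˢ qBox d'' k'' l z.2) p Kp w →
            (∫⁻ z, ENNReal.ofReal (f z) ^ p * ENNReal.ofReal (w z) ∂(μ'.prod μ'')) ^ (1 / p) ≤
              (∫⁻ z, ENNReal.ofReal (g z) ^ p * ENNReal.ofReal (w z) ∂(μ'.prod μ'')) ^ (1 / p)) →
          mixedNorm μ' μ'' p' p'' w' w'' f ≤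
            ENNReal.ofReal (2 ^ ((2 : ℝ) + 1 / p' + 1 / p'')) *
              mixedNorm μ' μ'' p' p'' w' w'' g := by
  have hQ' := boxFamily_qBox hk'
  have hQ'' := boxFamily_qBox hk''
  have hμ' := boxDoubling_qBox hdb'
  have hμ'' := boxDoubling_qBox hdb''
  have hp0 : 0 < p := by linarith
  have hp'0 : 0 < p' := by linarith
  have hp''0 : 0 < p'' := by linarith
  obtain ⟨K₁, hK₁, hE₁⟩ := extrapolation_isAp hQ'' hμ'' hp' hp'' K''
  obtain ⟨Kp, hKp, hE₂⟩ := extrapolation_isAp (hQ'.prod hQ'') (hμ'.prod hμ'') hp hp' (K' * K₁)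
  refine ⟨Kp, hKp, fun w' w'' hw' hw'' f g hf hg hf0 hg0 hfg => ?_⟩
  -- The partial norms in the first variable.
  let P : ((Fin d' → ℝ) × (Fin d'' → ℝ) → ℝ) → (Fin d'' → ℝ) → ℝ≥0∞ := fun f y =>
    (∫⁻ x, ENNReal.ofReal (f (x, y)) ^ p' * ENNReal.ofReal (w' x) ∂μ') ^ (1 / p')
  have hIm : ∀ f : (Fin d' → ℝ) × (Fin d'' → ℝ) → ℝ, Measurable f →
      Measurable fun z : (Fin d' → ℝ) × (Fin d'' → ℝ) =>
        ENNReal.ofReal (f z) ^ p' * ENNReal.ofReal (w' z.1) := fun f hf =>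
    (hf.ennreal_ofReal.pow_const _).mul (hw'.1.1.comp measurable_fst).ennreal_ofReal
  have hPm : ∀ f, Measurable f → Measurable (P f) := fun f hf =>
    (hIm f hf).lintegral_prod_left'.pow_const _
  have hPp : ∀ f y, P f y ^ p' =
      ∫⁻ x, ENNReal.ofReal (f (x, y)) ^ p' * ENNReal.ofReal (w' x) ∂μ' := fun f y => by
    simp only [P]
    rw [← ENNReal.rpow_mul, one_div_mul_cancel hp'0.ne', ENNReal.rpow_one]
  have hmixed : ∀ f : (Fin d' → ℝ) × (Fin d'' → ℝ) → ℝ, (∀ z, 0 ≤ f z) →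
      mixedNorm μ' μ'' p' p'' w' w'' f =
        (∫⁻ y, P f y ^ p'' * ENNReal.ofReal (w'' y) ∂μ'') ^ (1 / p'') := fun f hf0 => by
    rw [mixedNorm]
    congr 1
    refine lintegral_congr fun y => ?_
    simp only [P, abs_of_nonneg (hf0 _)]
    rw [← ENNReal.rpow_mul, one_div_mul_eq_div]
  have hFub : ∀ f : (Fin d' → ℝ) × (Fin d'' → ℝ) → ℝ, Measurable f → ∀ W : (Fin d'' → ℝ) → ℝ,
      Measurable W → ∫⁻ z, ENNReal.ofReal (f z) ^ p' * ENNReal.ofReal (w' z.1 * W z.2)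
        ∂(μ'.prod μ'') = ∫⁻ y, P f y ^ p' * ENNReal.ofReal (W y) ∂μ'' := fun f hf W hW => by
    have h0 : ∀ᵐ z ∂(μ'.prod μ''), 0 < w' z.1 :=
      Measure.quasiMeasurePreserving_fst.ae hw'.1.2.1
    calc _ = ∫⁻ z, ENNReal.ofReal (f z) ^ p' * ENNReal.ofReal (w' z.1) * ENNReal.ofReal (W z.2)
          ∂(μ'.prod μ'') := by
          refine lintegral_congr_ae ?_
          filter_upwards [h0] with z hz
          rw [ENNReal.ofReal_mul hz.le, mul_assoc]
      _ = _ := by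
          rw [lintegral_prod_symm' _ (show Measurable fun z : (Fin d' → ℝ) ×
              (Fin d'' → ℝ) => ENNReal.ofReal (f z) ^ p' * ENNReal.ofReal (w' z.1) *
              ENNReal.ofReal (W z.2) from
            (hIm f hf).mul (hW.comp measurable_snd).ennreal_ofReal)]
          refine lintegral_congr fun y => ?_
          rw [hPp, ← lintegral_mul_const]
          exact (hIm f hf).comp measurable_prodMk_right
  have hstep : ∀ W : (Fin d'' → ℝ) → ℝ, IsAp μ'' (qBox d'' k'') p' K₁ W →
      ∫⁻ y, P f y ^ p' * ENNReal.ofReal (W y) ∂μ'' ≤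
        ∫⁻ y, (2 * P g y) ^ p' * ENNReal.ofReal (W y) ∂μ'' := fun W hW => by
    have h1 := hE₂ _ (hw'.prod hμ' hp' hW) (fun z => ENNReal.ofReal (f z))
      (fun z => ENNReal.ofReal (g z)) hf.ennreal_ofReal hg.ennreal_ofReal
      (fun w hw => (ENNReal.rpow_le_rpow_iff (by positivity)).1 (hfg w hw))
    have h2 := ENNReal.rpow_le_rpow h1 hp'0.le
    rw [ENNReal.mul_rpow_of_nonneg _ _ hp'0.le, ← ENNReal.rpow_mul, ← ENNReal.rpow_mul,
      one_div_mul_cancel hp'0.ne', ENNReal.rpow_one, ENNReal.rpow_one, hFub f hf W hW.1.1,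
      hFub g hg W hW.1.1, ← lintegral_const_mul _ (show Measurable fun y =>
        P g y ^ p' * ENNReal.ofReal (W y) from
        ((hPm g hg).pow_const _).mul hW.1.1.ennreal_ofReal)] at h2
    refine h2.trans (le_of_eq (lintegral_congr fun y => ?_))
    rw [ENNReal.mul_rpow_of_nonneg _ _ hp'0.le, mul_assoc]
  have hfin := hE₁ w'' hw'' (P f) (fun y => 2 * P g y) (hPm f hf) ((hPm g hg).const_mul _) hstep
  rw [hmixed f hf0, hmixed g hg0]
  refine hfin.trans ?_
  have e : (∫⁻ y, (2 * P g y) ^ p'' * ENNReal.ofReal (w'' y) ∂μ'') ^ (1 / p'') =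
      2 * (∫⁻ y, P g y ^ p'' * ENNReal.ofReal (w'' y) ∂μ'') ^ (1 / p'') := by
    have : ∀ y, (2 * P g y) ^ p'' * ENNReal.ofReal (w'' y) =
        2 ^ p'' * (P g y ^ p'' * ENNReal.ofReal (w'' y)) := fun y => by
      rw [ENNReal.mul_rpow_of_nonneg _ _ hp''0.le, mul_assoc]
    simp only [this]
    rw [lintegral_const_mul _ (show Measurable fun y => P g y ^ p'' * ENNReal.ofReal (w'' y) from
        ((hPm g hg).pow_const _).mul hw''.1.1.ennreal_ofReal),
      ENNReal.mul_rpow_of_nonneg _ _ (by positivity), ← ENNReal.rpow_mul,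
      mul_one_div_cancel hp''0.ne', ENNReal.rpow_one]
  rw [e, ← mul_assoc]
  refine mul_le_mul_left ?_ _
  -- The two extrapolations cost a factor `2` each.
  calc (2 : ℝ≥0∞) * 2 = ENNReal.ofReal (2 ^ (2 : ℝ)) := by norm_num
    _ ≤ _ := by
        refine ENNReal.ofReal_le_ofReal (Real.rpow_le_rpow_of_exponent_le (by norm_num) ?_)
        have : 0 < 1 / p' := by positivity
        have : 0 < 1 / p'' := by positivity
        linarith
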